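/- Let P be a simple 3-polytope with p_3 = 0, p_4 ≤ 2, p_7 ≤ 1, and p_k = 0 for all k ≥ 8. Then P has no 3-belts; in particular, P is a flag 3-polytope. -/

import Mathlib

open Set

noncomputable section

/-- The ambient space `ℝ³`. -/
abbrev E3 := EuclideanSpace ℝ (Fin 3)

/-- The cyclic successor in `Fin k`. -/
def nxt {k : ℕ} (i : Fin k) : Fin k := ⟨(i.1 + 1) % k, Nat.mod_lt _ i.pos⟩

/-- The cyclic predecessor in `Fin k`. -/
def prv {k : ℕ} (i : Fin k) : Fin k := ⟨(i.1 + (k - 1)) % k, Nat.mod_lt _ i.pos⟩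

/-- A convex polytope in `ℝ³`: the convex hull of a finite set of points. -/
def IsPolytope (P : Set E3) : Prop := ∃ V : Finset E3, P = convexHull ℝ (V : Set E3)

/-- The dimension of a subset of `ℝ³` (the dimension of its affine hull). -/
def setDim (A : Set E3) : ℕ := Module.finrank ℝ ↥(vectorSpan ℝ A)

/-- A face of a polytope: a nonempty closed convex extreme subset. -/
def IsFaceOf (F P : Set E3) : Prop :=
  F.Nonempty ∧ IsClosed F ∧ Convex ℝ F ∧ IsExtreme ℝ P F

/-- A facet: a `2`-dimensional face. -/
def IsFacetOf (F P : Set E3) : Prop := IsFaceOf F P ∧ setDim F = 2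

/-- An edge: a `1`-dimensional face. -/
def IsEdgeOf (F P : Set E3) : Prop := IsFaceOf F P ∧ setDim F = 1

/-- A vertex: a point whose singleton is a face. -/
def IsVertexOf (v : E3) (P : Set E3) : Prop := IsFaceOf {v} P

/-- The set of facets of `P`. -/
def facets (P : Set E3) : Set (Set E3) := {F | IsFacetOf F P}

/-- A simple 3-polytope: a 3-dimensional convex polytope each of whose vertices
is contained in exactly 3 facets. -/
def IsSimplePolytope3 (P : Set E3) : Prop :=
  IsPolytope P ∧ setDim P = 3 ∧
    ∀ v : E3, IsVertexOf v P → {F | IsFacetOf F P ∧ v ∈ F}.ncard = 3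

/-- The number of edges of a facet `F` of `P`. -/
def facetEdges (P F : Set E3) : ℕ := {e | IsEdgeOf e P ∧ e ⊆ F}.ncard

/-- `pVec P k` is the number of `k`-gonal facets of `P`. -/
def pVec (P : Set E3) (k : ℕ) : ℕ := {F | IsFacetOf F P ∧ facetEdges P F = k}.ncard

/-- A (mathematical) fullerene: a simple 3-polytope with all facets pentagons
and hexagons. -/
def IsFullerene (P : Set E3) : Prop :=
  IsSimplePolytope3 P ∧ ∀ F, IsFacetOf F P → facetEdges P F = 5 ∨ facetEdges P F = 6

/-- A `k`-loop in `P` (`k ≥ 2`): a cyclic sequence of facets in which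
(cyclically) consecutive facets intersect in an edge; a `1`-loop is a single facet. -/
def IsLoop (P : Set E3) {k : ℕ} (L : Fin k → Set E3) : Prop :=
  0 < k ∧ (∀ i, IsFacetOf (L i) P) ∧ (2 ≤ k → ∀ i, IsEdgeOf (L i ∩ L (nxt i)) P)

/-- A simple loop: a loop with pairwise different facets. -/
def IsSimpleLoop (P : Set E3) {k : ℕ} (L : Fin k → Set E3) : Prop :=
  IsLoop P L ∧ Function.Injective L

/-- A `k`-belt (`k ≥ 3`): a `k`-loop such that for `k = 3` the three facets have empty
total intersection, and for `k ≥ 4` two facets intersect iff they are cyclically successive. -/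
def IsBelt (P : Set E3) {k : ℕ} (L : Fin k → Set E3) : Prop :=
  3 ≤ k ∧ IsLoop P L ∧
    (k = 3 → ∀ i, L i ∩ L (nxt i) ∩ L (nxt (nxt i)) = ∅) ∧
    (4 ≤ k → ∀ p q, p ≠ q → ((L p ∩ L q).Nonempty ↔ q = nxt p ∨ p = nxt q))

/-- A flag 3-polytope: a simple 3-polytope different from the tetrahedron
(i.e. not having exactly 4 facets) without 3-belts. -/
def IsFlag3Polytope (P : Set E3) : Prop :=
  IsSimplePolytope3 P ∧ (facets P).ncard ≠ 4 ∧ ∀ B : Fin 3 → Set E3, ¬ IsBelt P B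

/-- `γ` is the simple edge-cycle of `P` traced by the cyclically ordered distinct
vertices `v 0, …, v (n-1)` (`n ≥ 3`), consecutive ones joined by edges of `P`. -/
def IsSimpleEdgeCycleVia (P γ : Set E3) {n : ℕ} (v : Fin n → E3) : Prop :=
  3 ≤ n ∧ Function.Injective v ∧ (∀ i, IsVertexOf (v i) P) ∧
    (∀ i, IsEdgeOf (segment ℝ (v i) (v (nxt i))) P) ∧
    γ = ⋃ i, segment ℝ (v i) (v (nxt i))

/-- A simple edge-cycle in the graph of `P`. -/
def IsSimpleEdgeCycle (P γ : Set E3) : Prop :=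
  ∃ (n : ℕ) (v : Fin n → E3), IsSimpleEdgeCycleVia P γ v

/-- `C` is a connected component of the set `A`. -/
def IsCompOf (C A : Set E3) : Prop := ∃ x ∈ A, C = connectedComponentIn A x

/-- The loop `L` is obtained by walking round the simple edge-cycle `γ` inside the
connected component `C` of `∂P ∖ γ`: the facets of `L` lie on the side `C`, and the
edges of `γ`, in cyclic order, lie in the facets of `L` in cyclic order (the loop
index advancing exactly when the facet changes, and making exactly one turn). -/
def WalksRound (P γ C : Set E3) {k : ℕ} (L : Fin k → Set E3) : Prop :=
  IsLoop P L ∧ (∀ i, intrinsicInterior ℝ (L i) ⊆ C) ∧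
    ∃ (n : ℕ) (v : Fin n → E3) (φ : Fin n → Fin k),
      IsSimpleEdgeCycleVia P γ v ∧
      (∀ i, segment ℝ (v i) (v (nxt i)) ⊆ L (φ i)) ∧
      (∀ i, φ (nxt i) = φ i ∨ φ (nxt i) = nxt (φ i)) ∧
      Function.Surjective φ ∧
      (2 ≤ k → (Finset.univ.filter (fun i : Fin n => φ (nxt i) ≠ φ i)).card = k)

/-- Two loops border each other: they are obtained by walking round the same simple
edge-cycle `γ` in the two different connected components of `∂P ∖ γ`. -/
def Borders (P : Set E3) {k₁ k₂ : ℕ} (L₁ : Fin k₁ → Set E3) (L₂ : Fin k₂ → Set E3) : Prop :=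
  ∃ γ C₁ C₂ : Set E3, IsCompOf C₁ (frontier P \ γ) ∧ IsCompOf C₂ (frontier P \ γ) ∧
    C₁ ≠ C₂ ∧ WalksRound P γ C₁ L₁ ∧ WalksRound P γ C₂ L₂

/-- A loop surrounds the facet `F` if it borders the `1`-loop `(F)`. -/
def Surrounds (P : Set E3) {k : ℕ} (L : Fin k → Set E3) (F : Set E3) : Prop :=
  IsFacetOf F P ∧ Borders P L (fun _ : Fin 1 => F)

/-- The number of edges of `P` lying in the facet `F` and in the set `γ`. -/
def edgesInCommon (P F γ : Set E3) : ℕ := {e | IsEdgeOf e P ∧ e ⊆ F ∧ e ⊆ γ}.ncard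
/-- A simple 3-polytope all of whose facets are pentagons and hexagons except for
at most one exceptional facet, which is a quadrangle or a heptagon. -/
def IsAlmostFullerene (P : Set E3) : Prop :=
  IsSimplePolytope3 P ∧
    (∀ F, IsFacetOf F P → facetEdges P F ∈ ({4, 5, 6, 7} : Set ℕ)) ∧
    {F | IsFacetOf F P ∧ (facetEdges P F = 4 ∨ facetEdges P F = 7)}.ncard ≤ 1

/-- The (combinatorial) dodecahedron: a simple 3-polytope with all facets pentagons. -/
def IsDodecahedron (P : Set E3) : Prop :=
  IsSimplePolytope3 P ∧ ∀ F, IsFacetOf F P → facetEdges P F = 5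

/-- `e` and `e'` are opposite edges of the hexagonal facet `H`: they are disjoint and no
edge of `H` meets both of them. -/
def OppositeEdges (P H e e' : Set E3) : Prop :=
  IsEdgeOf e P ∧ IsEdgeOf e' P ∧ e ⊆ H ∧ e' ⊆ H ∧ e ∩ e' = ∅ ∧
    ∀ e'', IsEdgeOf e'' P → e'' ⊆ H → (e'' ∩ e).Nonempty → e'' ≠ e → e'' ∩ e' = ∅

/-- A cap: a pentagonal facet `F₀` together with a surrounding 5-belt of pentagons. -/
def IsCapOf (P F₀ : Set E3) (L : Fin 5 → Set E3) : Prop :=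
  IsFacetOf F₀ P ∧ facetEdges P F₀ = 5 ∧ (∀ i, facetEdges P (L i) = 5) ∧
    IsBelt P L ∧ Surrounds P L F₀

/-- The number of 5-belts of `P` (counted as sets of facets). -/
def fiveBeltCount (P : Set E3) : ℕ :=
  {S : Set (Set E3) | ∃ B : Fin 5 → Set E3, IsBelt P B ∧ S = Set.range B}.ncard

/-- The structure of the `k`-th fullerene of Family I: two caps separated by `k`
hexagonal 5-belts, each bordering the next (for `k = 0` the caps border each other,
giving the dodecahedron). -/
def FamilyI (P : Set E3) (k : ℕ) : Prop :=
  ∃ (F₀ F₀' : Set E3) (L L' : Fin 5 → Set E3) (B : ℕ → Fin 5 → Set E3),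
    IsCapOf P F₀ L ∧ IsCapOf P F₀' L' ∧
    (∀ i < k, IsBelt P (B i) ∧ ∀ j, facetEdges P (B i j) = 6) ∧
    (∀ i, i + 1 < k → Borders P (B i) (B (i + 1))) ∧
    (0 < k → Borders P L (B 0) ∧ Borders P (B (k - 1)) L') ∧
    (k = 0 → Borders P L L') ∧
    facets P = {F₀, F₀'} ∪ Set.range L ∪ Set.range L' ∪ ⋃ i ∈ Set.Iio k, Set.range (B i)

/-- `P` is obtained from `Q` by an `(s,k;t₀,t₁)`-truncation with new edge `Enew`:
`P` is cut off from `Q` by a halfspace `{f ≤ c}` whose boundary plane crosses exactly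
two edges `E₀ ≠ E₁` of a `k`-gonal facet `F` of `Q`, cutting off exactly `s` vertices,
all belonging to `F`; `G₀` and `G₁` are the facets meeting `F` along `E₀` and `E₁`, and
they are `t₀`- and `t₁`-gons; `Enew` is the new edge dividing `F`. -/
def IsTruncation (s k t₀ t₁ : ℕ) (Q P Enew : Set E3) : Prop :=
  IsSimplePolytope3 Q ∧ IsSimplePolytope3 P ∧
    ∃ (F E₀ E₁ G₀ G₁ : Set E3) (f : E3 →ₗ[ℝ] ℝ) (c : ℝ),
      IsFacetOf F Q ∧ facetEdges Q F = k ∧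
      IsEdgeOf E₀ Q ∧ IsEdgeOf E₁ Q ∧ E₀ ≠ E₁ ∧ E₀ ⊆ F ∧ E₁ ⊆ F ∧
      IsFacetOf G₀ Q ∧ IsFacetOf G₁ Q ∧ G₀ ≠ F ∧ G₁ ≠ F ∧ E₀ ⊆ G₀ ∧ E₁ ⊆ G₁ ∧
      facetEdges Q G₀ = t₀ ∧ facetEdges Q G₁ = t₁ ∧
      P = Q ∩ {x | f x ≤ c} ∧
      (∀ e, IsEdgeOf e Q → (∃ x ∈ e, c < f x) → (∃ x ∈ e, f x < c) → e = E₀ ∨ e = E₁) ∧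
      (∃ x ∈ E₀, c < f x) ∧ (∃ x ∈ E₀, f x < c) ∧
      (∃ x ∈ E₁, c < f x) ∧ (∃ x ∈ E₁, f x < c) ∧
      (∀ v, IsVertexOf v Q → f v ≠ c) ∧
      {v | IsVertexOf v Q ∧ c < f v}.ncard = s ∧
      (∀ v, IsVertexOf v Q → c < f v → v ∈ F) ∧
      Enew = F ∩ {x | f x = c}

/-- Combinatorial equivalence of polytopes: an inclusion-preserving bijection
between the sets of faces. -/
def CombEquiv (P Q : Set E3) : Prop :=
  ∃ φ : {A : Set E3 // IsFaceOf A P} ≃ {A : Set E3 // IsFaceOf A Q},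
    ∀ A B : {A : Set E3 // IsFaceOf A P}, A.1 ⊆ B.1 ↔ (φ A).1 ⊆ (φ B).1

/-- Combinatorial equivalence sending the face `Ep` of `P` to the face `Eq` of `Q`. -/
def CombEquivMapping (P Q Ep Eq : Set E3) : Prop :=
  ∃ φ : {A : Set E3 // IsFaceOf A P} ≃ {A : Set E3 // IsFaceOf A Q},
    (∀ A B : {A : Set E3 // IsFaceOf A P}, A.1 ⊆ B.1 ↔ (φ A).1 ⊆ (φ B).1) ∧
    ∀ h : IsFaceOf Ep P, ((φ ⟨Ep, h⟩) : {A : Set E3 // IsFaceOf A Q}).1 = Eq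

/-- The straightening of `P` along the edge `E` is defined: `P` is combinatorially
obtained from some simple 3-polytope `Q` by an `(s,k)`-truncation whose new edge
corresponds to `E`. -/
def StraighteningDefined (P E : Set E3) : Prop :=
  ∃ (s k t₀ t₁ : ℕ) (Q P₁ E₁ : Set E3),
    IsTruncation s k t₀ t₁ Q P₁ E₁ ∧ CombEquivMapping P P₁ E E₁

/-- `P` is obtained from `Q` by one of the truncations
`(1;4,5)`, `(1;5,5)`, `(2,6;4,5)`, `(2,6;5,5)`, `(2,6;5,6)`, `(2,7;5,5)`, `(2,7;5,6)`. -/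
def FullereneStep (Q P : Set E3) : Prop :=
  ∃ (s k t₀ t₁ : ℕ) (Enew : Set E3), IsTruncation s k t₀ t₁ Q P Enew ∧
    ((s = 1 ∧ (({t₀, t₁} : Finset ℕ) = {4, 5} ∨ ({t₀, t₁} : Finset ℕ) = {5, 5})) ∨
     (s = 2 ∧ k = 6 ∧ (({t₀, t₁} : Finset ℕ) = {4, 5} ∨ ({t₀, t₁} : Finset ℕ) = {5, 5} ∨
        ({t₀, t₁} : Finset ℕ) = {5, 6})) ∨
     (s = 2 ∧ k = 7 ∧ (({t₀, t₁} : Finset ℕ) = {5, 5} ∨ ({t₀, t₁} : Finset ℕ) = {5, 6})))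


/-!
In the triangulation of the sphere dual to `P` a 3-belt is a 3-cycle that bounds no triangle. The
plane through the midpoints of the three edges of the belt cuts `P` in a triangle, so every other
facet lies strictly on one side of it, and the 3-cycle separates the dual triangulation.

Give a side `S` of a separating 3-cycle the weight `ℓ + ∑ x ∈ S, (deg x - 6)⁺`, where `ℓ` is the
number of edges from the 3-cycle into `S`. The two sides of a 3-belt have total weight at most
`12 + ∑ x, (deg x - 6)⁺ ≤ 12 + p₇ ≤ 13`, so one of them has weight at most `6`. But such a side
contains a strictly smaller side, of some other 3-cycle, of no larger weight, which contradicts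
finiteness. Indeed, if some vertex of `S` spans triangles with two of the three edges of the cycle,
it can replace their common corner. Otherwise each corner has at least two, hence exactly two,
neighbours in `S`, and the 3-cycle of the three vertices opposite to the edges of the cycle takes
over; were it to bound a triangle, its vertices would be three quadrangles of `P`, but `p₄ ≤ 2`.
-/

/-! ### Triangulated surfaces -/

/-- An abstract triangulated closed surface on the vertex set `V`: the relation `Face` picks out
its triangles. For a simple 3-polytope it is the dual of the boundary complex, with facets as
vertices and vertices as triangles. The last field says that links are connected. -/
structure SurfaceTriangulation (V : Type*) where
  Face : V → V → V → Prop
  rotate : ∀ {a b c}, Face a b c → Face b c a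
  swap : ∀ {a b c}, Face a b c → Face b a c
  ne : ∀ {a b c}, Face a b c → a ≠ b
  existsUnique_opposite : ∀ {a b c}, Face a b c → ∃! d, d ≠ c ∧ Face a b d
  link_connected : ∀ {a b c b' c'}, Face a b c → Face a b' c' →
    Relation.ReflTransGen (Face a) b b'

namespace SurfaceTriangulation

variable {V : Type*} (K : SurfaceTriangulation V) {a b c d g g₁ g₂ g₃ u w x y : V}

/-- The 1-skeleton of a triangulated surface. -/
def graph : SimpleGraph V where
  Adj a b := ∃ c, K.Face a b c
  symm := ⟨fun _ _ ⟨c, h⟩ => ⟨c, K.swap h⟩⟩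
  loopless := ⟨fun _ ⟨_, h⟩ => K.ne h rfl⟩

instance : DecidableRel K.graph.Adj := Classical.decRel _

variable {K}

theorem Face.flip (h : K.Face a b c) : K.Face a c b := K.rotate (K.swap h)

theorem Face.adj (h : K.Face a b c) : K.graph.Adj a b := ⟨c, h⟩

theorem Face.adj_left (h : K.Face a b c) : K.graph.Adj a c := ⟨b, h.flip⟩

theorem Face.adj_right (h : K.Face a b c) : K.graph.Adj b c := ⟨a, K.rotate h⟩

theorem eq_or_eq_of_face (hu : K.Face a b u) (hw : K.Face a b w) (huw : u ≠ w)
    (hx : K.Face a b x) : x = u ∨ x = w := by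
  by_contra! h
  exact h.2 ((K.existsUnique_opposite hu).unique ⟨h.1, hx⟩ ⟨huw.symm, hw⟩)

theorem mem_of_adj_of_link_closed {N : Set V} (h : K.Face a b c) (hb : b ∈ N)
    (hN : ∀ x ∈ N, ∀ y, K.Face a x y → y ∈ N) (hx : K.graph.Adj a x) : x ∈ N := by
  obtain ⟨y, hy⟩ := hx
  have hpath := K.link_connected h hy
  clear hy
  induction hpath with
  | refl => exact hb
  | tail _ hface ih => exact hN _ ih _ hface

variable {S S' : Finset V}

/-- `S` is the set of vertices on one side of the separating 3-cycle `a b c`. -/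
structure IsSide (K : SurfaceTriangulation V) (a b c : V) (S : Finset V) : Prop where
  not_face : ¬K.Face a b c
  left_notMem : a ∉ S
  middle_notMem : b ∉ S
  right_notMem : c ∉ S
  mem_or_eq_of_adj : ∀ x ∈ S, ∀ y, K.graph.Adj x y → y ∈ S ∨ y = a ∨ y = b ∨ y = c
  existsUnique_left_middle : ∃! u, u ∈ S ∧ K.Face a b u
  existsUnique_middle_right : ∃! u, u ∈ S ∧ K.Face b c u
  existsUnique_right_left : ∃! u, u ∈ S ∧ K.Face c a u

theorem existsUnique_mem_face {T : Finset V} (hx : K.Face a b x) (hxT : x ∉ T)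
    (hT : ∀ d, d ≠ x → K.Face a b d → d ∈ T) : ∃! u, u ∈ T ∧ K.Face a b u := by
  obtain ⟨d, ⟨hdx, hd⟩, hunique⟩ := K.existsUnique_opposite hx
  exact ⟨d, ⟨hT d hdx hd, hd⟩, fun u hu => hunique u ⟨fun h => hxT (h ▸ hu.1), hu.2⟩⟩

namespace IsSide

theorem rotate (h : K.IsSide a b c S) : K.IsSide b c a S where
  not_face hf := h.not_face (K.rotate (K.rotate hf))
  left_notMem := h.middle_notMem
  middle_notMem := h.right_notMem
  right_notMem := h.left_notMem
  mem_or_eq_of_adj x hx y hy := by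
    rcases h.mem_or_eq_of_adj x hx y hy with h | h | h | h <;> simp [h]
  existsUnique_left_middle := h.existsUnique_middle_right
  existsUnique_middle_right := h.existsUnique_right_left
  existsUnique_right_left := h.existsUnique_left_middle

theorem left_ne_middle (h : K.IsSide a b c S) : a ≠ b := by
  obtain ⟨u, hu, -⟩ := h.existsUnique_left_middle
  exact K.ne hu.2

theorem eq_of_adj_middle (h : K.IsSide a b c S) (hg : g ∈ S) (hab : K.Face a b g)
    (hbc : K.Face b c g) (hx : x ∈ S) (hbx : K.graph.Adj b x) : x = g := by
  refine mem_of_adj_of_link_closed (N := {y | y ∈ S → y = g}) hbc.flip (fun _ => rfl)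
    (fun y hy z hf hz => ?_) hbx hx
  rcases h.mem_or_eq_of_adj z hz y (K.rotate hf).adj.symm with hyS | rfl | rfl | rfl
  · obtain rfl := hy hyS
    rcases eq_or_eq_of_face (K.rotate hab) hbc.flip h.rotate.rotate.left_ne_middle.symm hf
      with rfl | rfl
    · exact (h.left_notMem hz).elim
    · exact (h.right_notMem hz).elim
  · exact h.existsUnique_left_middle.unique ⟨hz, K.swap hf⟩ ⟨hg, hab⟩
  · exact (K.ne hf rfl).elim
  · exact h.existsUnique_middle_right.unique ⟨hz, hf⟩ ⟨hg, hbc⟩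

theorem erase_apex [DecidableEq V] (h : K.IsSide a b c S) (hg : g ∈ S) (hab : K.Face a b g)
    (hbc : K.Face b c g) (hca : ¬K.Face c a g) : K.IsSide c a g (S.erase g) where
  not_face := hca
  left_notMem hc := h.right_notMem (Finset.mem_of_mem_erase hc)
  middle_notMem ha := h.left_notMem (Finset.mem_of_mem_erase ha)
  right_notMem := S.notMem_erase g
  mem_or_eq_of_adj x hx y hy := by
    obtain ⟨hxg, hxS⟩ := Finset.mem_erase.1 hx
    have hyb : y ≠ b := fun hyb => hxg (h.eq_of_adj_middle hg hab hbc hxS (hyb ▸ hy.symm))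
    have := h.mem_or_eq_of_adj x hxS y hy
    rw [Finset.mem_erase]
    tauto
  existsUnique_left_middle := by
    obtain ⟨u, ⟨huS, hu⟩, hunique⟩ := h.existsUnique_right_left
    exact ⟨u, ⟨Finset.mem_erase.2 ⟨fun hug => hca (hug ▸ hu), huS⟩, hu⟩,
      fun v hv => hunique v ⟨Finset.mem_of_mem_erase hv.1, hv.2⟩⟩
  existsUnique_middle_right := existsUnique_mem_face hab.flip
    (fun hb => h.middle_notMem (Finset.mem_of_mem_erase hb)) fun d hdb hd => by
      have hdc : d ≠ c := by rintro rfl; exact hca (K.rotate (K.rotate hd))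
      have := h.mem_or_eq_of_adj g hg d hd.adj_right
      have := K.ne hd.flip
      have := K.ne (K.rotate hd)
      grind
  existsUnique_right_left := existsUnique_mem_face (K.rotate (K.rotate (K.swap hbc)))
    (fun hb => h.middle_notMem (Finset.mem_of_mem_erase hb)) fun d hdb hd => by
      have hda : d ≠ a := by rintro rfl; exact hca (K.rotate hd)
      have := h.mem_or_eq_of_adj g hg d hd.adj_left
      have := K.ne (K.rotate hd)
      have := K.ne hd.flip
      grind

end IsSide

/-- A side whose corners have only two neighbours in it, one over each adjacent edge of the
3-cycle: `g₁` lies over `a b`, `g₂` over `b c` and `g₃` over `c a`. -/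
structure IsTightSide (K : SurfaceTriangulation V) (a b c g₁ g₂ g₃ : V) (S : Finset V) : Prop
    extends K.IsSide a b c S where
  mem₁ : g₁ ∈ S
  mem₂ : g₂ ∈ S
  mem₃ : g₃ ∈ S
  ne₁₂ : g₁ ≠ g₂
  ne₂₃ : g₂ ≠ g₃
  ne₃₁ : g₃ ≠ g₁
  face₁ : K.Face a b g₁
  face₂ : K.Face b c g₂
  face₃ : K.Face c a g₃
  eq_or_eq_of_adj_left : ∀ x ∈ S, K.graph.Adj a x → x = g₃ ∨ x = g₁
  eq_or_eq_of_adj_middle : ∀ x ∈ S, K.graph.Adj b x → x = g₁ ∨ x = g₂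
  eq_or_eq_of_adj_right : ∀ x ∈ S, K.graph.Adj c x → x = g₂ ∨ x = g₃

namespace IsTightSide

theorem rotate (h : K.IsTightSide a b c g₁ g₂ g₃ S) : K.IsTightSide b c a g₂ g₃ g₁ S where
  toIsSide := h.toIsSide.rotate
  mem₁ := h.mem₂
  mem₂ := h.mem₃
  mem₃ := h.mem₁
  ne₁₂ := h.ne₂₃
  ne₂₃ := h.ne₃₁
  ne₃₁ := h.ne₁₂
  face₁ := h.face₂
  face₂ := h.face₃
  face₃ := h.face₁
  eq_or_eq_of_adj_left := h.eq_or_eq_of_adj_middle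
  eq_or_eq_of_adj_middle := h.eq_or_eq_of_adj_right
  eq_or_eq_of_adj_right := h.eq_or_eq_of_adj_left

theorem face_left (h : K.IsTightSide a b c g₁ g₂ g₃ S) : K.Face a g₃ g₁ := by
  obtain ⟨d, ⟨hdb, hd⟩, -⟩ := K.existsUnique_opposite h.face₁.flip
  have hdc : d ≠ c := by
    rintro rfl
    exact h.ne₃₁ (h.existsUnique_right_left.unique ⟨h.mem₃, h.face₃⟩ ⟨h.mem₁, K.swap hd.flip⟩)
  rcases h.mem_or_eq_of_adj g₁ h.mem₁ d hd.adj_right with hdS | rfl | rfl | rfl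
  · rcases h.eq_or_eq_of_adj_left d hdS hd.adj_left with rfl | rfl
    · exact hd.flip
    · exact (K.ne (K.rotate hd) rfl).elim
  · exact (K.ne hd.flip rfl).elim
  · exact (hdb rfl).elim
  · exact (hdc rfl).elim

theorem not_adj_opposite (h : K.IsTightSide a b c g₁ g₂ g₃ S) : ¬K.graph.Adj a g₂ := fun hadj =>
  (h.eq_or_eq_of_adj_left g₂ h.mem₂ hadj).elim h.ne₂₃ h.ne₁₂.symm

variable [DecidableEq V]

theorem sdiff_rotate : S \ {g₂, g₃, g₁} = S \ {g₁, g₂, g₃} := by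
  rw [show ({g₂, g₃, g₁} : Finset V) = {g₁, g₂, g₃} by ext; simp; tauto]

theorem existsUnique_inner (h : K.IsTightSide a b c g₁ g₂ g₃ S) (hg : ¬K.Face g₁ g₂ g₃) :
    ∃! u, u ∈ S \ {g₁, g₂, g₃} ∧ K.Face g₁ g₂ u :=
  existsUnique_mem_face (K.rotate h.rotate.face_left)
    (fun hb => h.middle_notMem (Finset.mem_sdiff.1 hb).1) fun d hdb hd => by
      have hda : d ≠ a := fun hda => h.not_adj_opposite (hda ▸ hd.adj_right.symm)
      have hdc : d ≠ c := fun hdc => h.rotate.rotate.not_adj_opposite (hdc ▸ hd.adj_left.symm)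
      have := h.mem_or_eq_of_adj g₁ h.mem₁ d hd.adj_left
      have := hd.adj_left.ne
      have := hd.adj_right.ne
      grind

theorem isSide_inner (h : K.IsTightSide a b c g₁ g₂ g₃ S) (hg : ¬K.Face g₁ g₂ g₃) :
    K.IsSide g₁ g₂ g₃ (S \ {g₁, g₂, g₃}) where
  not_face := hg
  left_notMem := by simp
  middle_notMem := by simp
  right_notMem := by simp
  mem_or_eq_of_adj x hx y hy := by
    simp only [Finset.mem_sdiff, Finset.mem_insert, Finset.mem_singleton, not_or] at hx
    have := h.mem_or_eq_of_adj x hx.1 y hy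
    have := h.eq_or_eq_of_adj_left x hx.1
    have := h.eq_or_eq_of_adj_middle x hx.1
    have := h.eq_or_eq_of_adj_right x hx.1
    have := hy.symm
    grind
  existsUnique_left_middle := h.existsUnique_inner hg
  existsUnique_middle_right := by
    rw [← sdiff_rotate]
    exact h.rotate.existsUnique_inner fun hf => hg (K.rotate (K.rotate hf))
  existsUnique_right_left := by
    rw [← sdiff_rotate, ← sdiff_rotate]
    exact h.rotate.rotate.existsUnique_inner fun hf => hg (K.rotate hf)

end IsTightSide

variable [Fintype V]

theorem degree_le_card_of_link_closed {N : Finset V} (h : K.Face a b c) (hb : b ∈ N)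
    (hN : ∀ x ∈ N, ∀ y, K.Face a x y → y ∈ N) : K.graph.degree a ≤ N.card := by
  refine Finset.card_le_card fun x hx => ?_
  rw [SimpleGraph.mem_neighborFinset] at hx
  exact mem_of_adj_of_link_closed (N := (N : Set V)) h hb hN hx

theorem three_le_degree (h : K.Face a b c) : 3 ≤ K.graph.degree a := by
  classical
  obtain ⟨d, ⟨hdc, hd⟩, -⟩ := K.existsUnique_opposite h
  have hcard : ({b, c, d} : Finset V).card = 3 :=
    Finset.card_eq_three.2 ⟨b, c, d, K.ne (K.rotate h), K.ne (K.rotate hd), hdc.symm, rfl⟩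
  rw [← hcard]
  refine Finset.card_le_card fun x hx => ?_
  rw [SimpleGraph.mem_neighborFinset]
  simp only [Finset.mem_insert, Finset.mem_singleton] at hx
  rcases hx with rfl | rfl | rfl
  exacts [h.adj, h.adj_left, hd.adj_left]

theorem degree_le_three_of_link (hbc : K.Face a b c) (hcd : K.Face a c d) (hdb : K.Face a d b) :
    K.graph.degree a ≤ 3 := by
  classical
  have hne := K.ne (K.rotate hbc)
  have hne' := K.ne (K.rotate hcd)
  have hne'' := K.ne (K.rotate hdb)
  refine (degree_le_card_of_link_closed (N := {b, c, d}) hbc (by simp) fun x hx y hy => ?_).trans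
    Finset.card_le_three
  simp only [Finset.mem_insert, Finset.mem_singleton] at hx ⊢
  rcases hx with rfl | rfl | rfl
  · exact Or.inr (eq_or_eq_of_face hbc hdb.flip hne' hy)
  · exact (eq_or_eq_of_face hbc.flip hcd hne''.symm hy).imp_right Or.inr
  · exact (eq_or_eq_of_face hdb hcd.flip hne hy).imp_right Or.inl

theorem degree_le_four_of_link {e : V} (hbc : K.Face a b c) (hcd : K.Face a c d)
    (hde : K.Face a d e) (heb : K.Face a e b) (hbd : b ≠ d) (hce : c ≠ e) :
    K.graph.degree a ≤ 4 := by
  classical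
  refine (degree_le_card_of_link_closed (N := {b, c, d, e}) hbc (by simp) fun x hx y hy => ?_).trans
    Finset.card_le_four
  simp only [Finset.mem_insert, Finset.mem_singleton] at hx ⊢
  rcases hx with rfl | rfl | rfl | rfl
  · rcases eq_or_eq_of_face hbc heb.flip hce hy with rfl | rfl <;> simp
  · rcases eq_or_eq_of_face hbc.flip hcd hbd hy with rfl | rfl <;> simp
  · rcases eq_or_eq_of_face hcd.flip hde hce hy with rfl | rfl <;> simp
  · rcases eq_or_eq_of_face hde.flip heb hbd.symm hy with rfl | rfl <;> simp

namespace IsTightSide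

theorem degree_le_four_of_face (h : K.IsTightSide a b c g₁ g₂ g₃ S) (hg : K.Face g₁ g₂ g₃) :
    K.graph.degree g₁ ≤ 4 :=
  degree_le_four_of_link (K.rotate (K.rotate h.face₁)) (K.swap h.rotate.face_left) hg
    (K.rotate (K.rotate h.face_left)).flip
    (fun ha => h.left_notMem (ha ▸ h.mem₂)) fun hb => h.middle_notMem (hb ▸ h.mem₃)

theorem not_face_inner (h : K.IsTightSide a b c g₁ g₂ g₃ S) (hdeg : ∀ x, 4 ≤ K.graph.degree x)
    (hfour : (Finset.univ.filter fun x => K.graph.degree x = 4).card ≤ 2) :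
    ¬K.Face g₁ g₂ g₃ := fun hg => by
  classical
  have h₁ := h.degree_le_four_of_face hg
  have h₂ := h.rotate.degree_le_four_of_face (K.rotate hg)
  have h₃ := h.rotate.rotate.degree_le_four_of_face (K.rotate (K.rotate hg))
  have hsub : ({g₁, g₂, g₃} : Finset V) ⊆ Finset.univ.filter fun x => K.graph.degree x = 4 := by
    simp [Finset.insert_subset_iff, h₁.antisymm (hdeg _), h₂.antisymm (hdeg _),
      h₃.antisymm (hdeg _)]
  have := Finset.card_le_card hsub
  have : ({g₁, g₂, g₃} : Finset V).card = 3 :=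
    Finset.card_eq_three.2 ⟨_, _, _, h.ne₁₂, h.ne₃₁.symm, h.ne₂₃, rfl⟩
  lia

end IsTightSide

section Weight

variable [DecidableEq V]

/-- The number of neighbours of `a` in `S`. -/
def degreeIn (K : SurfaceTriangulation V) (a : V) (S : Finset V) : ℕ :=
  (S ∩ K.graph.neighborFinset a).card

/-- The quantity that does not increase when a side is shrunk: the length of the cycle bounding
`S`, plus the total excess of the degrees in `S` over `6` (truncated subtraction is intended). -/
def weight (K : SurfaceTriangulation V) (a b c : V) (S : Finset V) : ℕ :=
  K.degreeIn a S + K.degreeIn b S + K.degreeIn c S + ∑ x ∈ S, (K.graph.degree x - 6)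

theorem degreeIn_pos (hx : x ∈ S) (h : K.graph.Adj a x) : 0 < K.degreeIn a S :=
  Finset.card_pos.2 ⟨x, by simpa [hx] using h⟩

theorem degreeIn_erase_add_one (hx : x ∈ S) (h : K.graph.Adj a x) :
    K.degreeIn a (S.erase x) + 1 = K.degreeIn a S := by
  rw [degreeIn, Finset.erase_inter, Finset.card_erase_add_one (by simpa [hx] using h), degreeIn]

theorem degreeIn_add_card_le {T : Finset V} (hST : Disjoint S T)
    (hT : ∀ x ∈ T, K.graph.Adj a x) : K.degreeIn a S + T.card ≤ K.graph.degree a := by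
  rw [degreeIn, ← Finset.card_union_of_disjoint (hST.mono_left Finset.inter_subset_left)]
  refine Finset.card_le_card (Finset.union_subset Finset.inter_subset_right fun x hx => ?_)
  simpa using hT x hx

theorem IsSide.weight_erase_apex_le (h : K.IsSide a b c S) (hg : g ∈ S) (hab : K.Face a b g)
    (hbc : K.Face b c g) : K.weight c a g (S.erase g) ≤ K.weight a b c S := by
  have ha := degreeIn_erase_add_one hg hab.adj_left
  have hb := degreeIn_pos hg hbc.adj_left
  have hc := degreeIn_erase_add_one hg hbc.adj_right
  have hdisj : Disjoint (S.erase g) {a, b, c} := by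
    simp [h.left_notMem, h.middle_notMem, h.right_notMem]
  have hcard : ({a, b, c} : Finset V).card = 3 := Finset.card_eq_three.2
    ⟨a, b, c, h.left_ne_middle, h.rotate.rotate.left_ne_middle.symm, h.rotate.left_ne_middle, rfl⟩
  have hg' := degreeIn_add_card_le (K := K) (a := g) hdisj (by
    simp [hab.adj_left.symm, hab.adj_right.symm, hbc.adj_right.symm])
  have := Finset.add_sum_erase S (fun x => K.graph.degree x - 6) hg
  unfold weight
  lia

namespace IsTightSide

theorem degreeIn_inner_add_four_le (h : K.IsTightSide a b c g₁ g₂ g₃ S) :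
    K.degreeIn g₁ (S \ {g₁, g₂, g₃}) + 4 ≤ K.graph.degree g₁ := by
  have hab := h.left_ne_middle
  have hcard : ({a, b, g₂, g₃} : Finset V).card = 4 := by
    have := h.left_notMem
    have := h.middle_notMem
    have := h.mem₂
    have := h.mem₃
    have := h.ne₂₃
    grind
  have hdisj : Disjoint (S \ {g₁, g₂, g₃}) {a, b, g₂, g₃} := by
    simp [h.left_notMem, h.middle_notMem]
  rw [← hcard]
  refine degreeIn_add_card_le hdisj ?_
  simp [h.face₁.adj_left.symm, h.face₁.adj_right.symm, h.face_left.adj_right.symm,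
    h.rotate.face_left.adj_right]

theorem weight_inner_le (h : K.IsTightSide a b c g₁ g₂ g₃ S) :
    K.weight g₁ g₂ g₃ (S \ {g₁, g₂, g₃}) ≤ 6 + ∑ x ∈ S, (K.graph.degree x - 6) := by
  have h₁ := h.degreeIn_inner_add_four_le
  have h₂ := h.rotate.degreeIn_inner_add_four_le
  have h₃ := h.rotate.rotate.degreeIn_inner_add_four_le
  rw [sdiff_rotate] at h₂ h₃
  rw [sdiff_rotate] at h₃
  have hsub : ({g₁, g₂, g₃} : Finset V) ⊆ S := by
    simp [Finset.insert_subset_iff, h.mem₁, h.mem₂, h.mem₃]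
  have hsum := Finset.sum_sdiff (f := fun x => K.graph.degree x - 6) hsub
  rw [Finset.sum_insert (by simp [h.ne₁₂, h.ne₃₁.symm]), Finset.sum_pair h.ne₂₃] at hsum
  unfold weight
  lia

end IsTightSide

theorem eq_or_eq_of_degreeIn_le_two (hu : u ∈ S) (hw : w ∈ S) (huw : u ≠ w)
    (hau : K.graph.Adj a u) (haw : K.graph.Adj a w) (hle : K.degreeIn a S ≤ 2) (hx : x ∈ S)
    (hax : K.graph.Adj a x) : x = u ∨ x = w := by
  have hsub : ({u, w} : Finset V) ⊆ S ∩ K.graph.neighborFinset a := by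
    simp [Finset.insert_subset_iff, hu, hw, hau, haw]
  have heq := Finset.eq_of_subset_of_card_le hsub (by rwa [Finset.card_pair huw])
  have hmem : x ∈ S ∩ K.graph.neighborFinset a := by simp [hx, hax]
  simpa [← heq] using hmem

theorem two_le_degreeIn (hu : u ∈ S) (hw : w ∈ S) (huw : u ≠ w) (hau : K.graph.Adj a u)
    (haw : K.graph.Adj a w) : 2 ≤ K.degreeIn a S := by
  rw [← Finset.card_pair huw]
  exact Finset.card_le_card (by simp [Finset.insert_subset_iff, hu, hw, hau, haw])

theorem weight_rotate : K.weight b c a S = K.weight a b c S := by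
  unfold weight
  lia

namespace IsSide

theorem exists_smaller_of_apex (h : K.IsSide a b c S) (hdeg : ∀ x, 4 ≤ K.graph.degree x)
    (hg : g ∈ S) (hab : K.Face a b g) (hbc : K.Face b c g) :
    ∃ a' b' c', ∃ S' ⊂ S, K.IsSide a' b' c' S' ∧ K.weight a' b' c' S' ≤ K.weight a b c S := by
  have hca : ¬K.Face c a g := fun hca => by
    have := degree_le_three_of_link (K.rotate (K.rotate hab)) (K.rotate (K.rotate hbc))
      (K.rotate (K.rotate hca))
    have := hdeg g
    lia
  exact ⟨c, a, g, S.erase g, Finset.erase_ssubset hg, h.erase_apex hg hab hbc hca,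
    h.weight_erase_apex_le hg hab hbc⟩

theorem exists_smaller (h : K.IsSide a b c S) (hdeg : ∀ x, 4 ≤ K.graph.degree x)
    (hfour : (Finset.univ.filter fun x => K.graph.degree x = 4).card ≤ 2)
    (hweight : K.weight a b c S ≤ 6) :
    ∃ a' b' c', ∃ S' ⊂ S, K.IsSide a' b' c' S' ∧ K.weight a' b' c' S' ≤ K.weight a b c S := by
  obtain ⟨g₁, ⟨hS₁, hg₁⟩, -⟩ := h.existsUnique_left_middle
  obtain ⟨g₂, ⟨hS₂, hg₂⟩, -⟩ := h.existsUnique_middle_right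
  obtain ⟨g₃, ⟨hS₃, hg₃⟩, -⟩ := h.existsUnique_right_left
  by_cases h₁₂ : g₁ = g₂
  · exact h.exists_smaller_of_apex hdeg hS₁ hg₁ (h₁₂ ▸ hg₂)
  by_cases h₂₃ : g₂ = g₃
  · simpa only [weight_rotate] using h.rotate.exists_smaller_of_apex hdeg hS₂ hg₂ (h₂₃ ▸ hg₃)
  by_cases h₃₁ : g₃ = g₁
  · simpa only [weight_rotate] using
      h.rotate.rotate.exists_smaller_of_apex hdeg hS₃ hg₃ (h₃₁ ▸ hg₁)
  have ha := two_le_degreeIn hS₃ hS₁ h₃₁ hg₃.adj_right hg₁.adj_left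
  have hb := two_le_degreeIn hS₁ hS₂ h₁₂ hg₁.adj_right hg₂.adj_left
  have hc := two_le_degreeIn hS₂ hS₃ h₂₃ hg₂.adj_right hg₃.adj_left
  have hweight_eq : K.weight a b c S = K.degreeIn a S + K.degreeIn b S + K.degreeIn c S +
    ∑ x ∈ S, (K.graph.degree x - 6) := rfl
  have htight : K.IsTightSide a b c g₁ g₂ g₃ S :=
    { h with
      mem₁ := hS₁, mem₂ := hS₂, mem₃ := hS₃, ne₁₂ := h₁₂, ne₂₃ := h₂₃, ne₃₁ := h₃₁
      face₁ := hg₁, face₂ := hg₂, face₃ := hg₃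
      eq_or_eq_of_adj_left := fun x => eq_or_eq_of_degreeIn_le_two hS₃ hS₁ h₃₁ hg₃.adj_right
        hg₁.adj_left (by lia)
      eq_or_eq_of_adj_middle := fun x => eq_or_eq_of_degreeIn_le_two hS₁ hS₂ h₁₂ hg₁.adj_right
        hg₂.adj_left (by lia)
      eq_or_eq_of_adj_right := fun x => eq_or_eq_of_degreeIn_le_two hS₂ hS₃ h₂₃ hg₂.adj_right
        hg₃.adj_left (by lia) }
  refine ⟨g₁, g₂, g₃, S \ {g₁, g₂, g₃}, ?_, htight.isSide_inner (htight.not_face_inner hdeg hfour),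
    htight.weight_inner_le.trans (by lia)⟩
  exact Finset.sdiff_ssubset (by simp [Finset.insert_subset_iff, *]) (by simp)

theorem six_lt_weight (h : K.IsSide a b c S) (hdeg : ∀ x, 4 ≤ K.graph.degree x)
    (hfour : (Finset.univ.filter fun x => K.graph.degree x = 4).card ≤ 2) :
    6 < K.weight a b c S := by
  induction S using Finset.strongInduction generalizing a b c with
  | H S ih =>
    by_contra! hweight
    obtain ⟨a', b', c', S', hsub, hside, hle⟩ := h.exists_smaller hdeg hfour hweight
    exact (ih S' hsub hside).not_ge (hle.trans hweight)

theorem degreeIn_add_degreeIn_le (h : K.IsSide a b c S) (h' : K.IsSide a b c S')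
    (hdisj : Disjoint S S') :
    K.degreeIn a S + K.degreeIn a S' ≤ 4 + (K.graph.degree a - 6) := by
  obtain ⟨u, -, hab⟩ := h.existsUnique_left_middle.exists
  obtain ⟨v, -, hca⟩ := h.existsUnique_right_left.exists
  have hbc := h.rotate.left_ne_middle
  have hS : Disjoint S {b, c} := by simp [h.middle_notMem, h.right_notMem]
  have hS' : Disjoint S' {b, c} := by simp [h'.middle_notMem, h'.right_notMem]
  have hle := degreeIn_add_card_le (K := K) (a := a) (S := S)
    (T := (S' ∩ K.graph.neighborFinset a) ∪ {b, c})
    (Finset.disjoint_union_right.2 ⟨hdisj.mono_right Finset.inter_subset_left, hS⟩)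
    fun x hx => by
      simp only [Finset.mem_union, Finset.mem_inter, SimpleGraph.mem_neighborFinset,
        Finset.mem_insert, Finset.mem_singleton] at hx
      rcases hx with hx | rfl | rfl
      exacts [hx.2, hab.adj, hca.adj.symm]
  rw [Finset.card_union_of_disjoint (hS'.mono_left Finset.inter_subset_left),
    Finset.card_pair hbc, ← degreeIn] at hle
  lia

end IsSide

end Weight

/-- The two boundary lengths add up to at most `12` plus the excess on the 3-cycle, so a total
excess of at most `1` leaves one of the two sides with weight at most `6`. -/
theorem IsSide.false_of_disjoint (h : K.IsSide a b c S) (h' : K.IsSide a b c S')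
    (hdisj : Disjoint S S') (hdeg : ∀ x, 4 ≤ K.graph.degree x)
    (hfour : (Finset.univ.filter fun x => K.graph.degree x = 4).card ≤ 2)
    (hexcess : ∑ x, (K.graph.degree x - 6) ≤ 1) : False := by
  classical
  have ha := h.degreeIn_add_degreeIn_le h' hdisj
  have hb := h.rotate.degreeIn_add_degreeIn_le h'.rotate hdisj
  have hc := h.rotate.rotate.degreeIn_add_degreeIn_le h'.rotate.rotate hdisj
  have hS := h.six_lt_weight hdeg hfour
  have hS' := h'.six_lt_weight hdeg hfour
  have hsum : ∑ x ∈ S, (K.graph.degree x - 6) + ∑ x ∈ S', (K.graph.degree x - 6) +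
      ∑ x ∈ {a, b, c}, (K.graph.degree x - 6) ≤ 1 := by
    rw [← Finset.sum_union hdisj, ← Finset.sum_union]
    · exact (Finset.sum_le_univ_sum_of_nonneg fun _ => Nat.zero_le _).trans hexcess
    · simp [h.left_notMem, h.middle_notMem, h.right_notMem, h'.left_notMem, h'.middle_notMem,
        h'.right_notMem]
  rw [Finset.sum_insert (by simp [h.left_ne_middle, h.rotate.rotate.left_ne_middle.symm]),
    Finset.sum_pair h.rotate.left_ne_middle] at hsum
  unfold weight at hS hS'
  lia

end SurfaceTriangulation

/-! ### Convex polytopes and their facets -/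

section Convex

variable {E : Type*} [NormedAddCommGroup E] [NormedSpace ℝ E] {A B P : Set E} {p y z : E}

theorem exists_add_smul_sub_mem_of_mem_intrinsicInterior (hz : z ∈ intrinsicInterior ℝ A)
    (hp : p ∈ affineSpan ℝ A) : ∃ t : ℝ, 0 < t ∧ z + t • (z - p) ∈ A := by
  obtain ⟨y, hy, rfl⟩ := mem_intrinsicInterior.1 hz
  let γ : ℝ → affineSpan ℝ A := fun t => ⟨AffineMap.lineMap (y : E) p (-t),
    AffineMap.lineMap_mem _ y.2 hp⟩
  have hγ : Continuous γ := (AffineMap.lineMap_continuous.comp continuous_neg).subtype_mk _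
  have hγ₀ : γ 0 = y := by
    ext
    simp [γ]
  have hev : ∀ᶠ t in nhds (0 : ℝ), γ t ∈ interior ((↑) ⁻¹' A : Set (affineSpan ℝ A)) := by
    refine hγ.continuousAt.eventually_mem ?_
    rw [hγ₀]
    exact isOpen_interior.mem_nhds hy
  obtain ⟨t, ht, ht₀⟩ :=
    ((hev.filter_mono (nhdsWithin_le_nhds (s := Ioi 0))).and self_mem_nhdsWithin).exists
  refine ⟨t, ht₀, ?_⟩
  have hmem : (γ t : E) ∈ A := interior_subset (s := ((↑) ⁻¹' A : Set (affineSpan ℝ A))) ht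
  change AffineMap.lineMap (y : E) p (-t) ∈ A at hmem
  rw [AffineMap.lineMap_apply_module'] at hmem
  convert hmem using 1
  module

theorem mem_openSegment_add_smul_sub {t : ℝ} (ht : 0 < t) :
    z ∈ openSegment ℝ p (z + t • (z - p)) := by
  refine ⟨t / (1 + t), 1 / (1 + t), by positivity, by positivity, by field_simp; ring, ?_⟩
  have ht' : 1 + t ≠ 0 := by positivity
  match_scalars
  · field_simp
    ring
  · field_simp

theorem subset_of_mem_intrinsicInterior (hB : IsExtreme ℝ P B) (hAP : A ⊆ P)
    (hz : z ∈ intrinsicInterior ℝ A) (hzB : z ∈ B) : A ⊆ B := fun p hp => by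
  obtain ⟨t, ht, hmem⟩ :=
    exists_add_smul_sub_mem_of_mem_intrinsicInterior hz (subset_affineSpan ℝ A hp)
  exact hB.2 (hAP hp) (hAP hmem) hzB (mem_openSegment_add_smul_sub ht)

theorem exists_affineMap_pos_on_interior (hP : Convex ℝ P) (hne : (interior P).Nonempty)
    (hz : z ∉ interior P) :
    ∃ ℓ : E →ᵃ[ℝ] ℝ, ℓ z = 0 ∧ (∀ x ∈ P, 0 ≤ ℓ x) ∧ ∀ x ∈ interior P, 0 < ℓ x := by
  obtain ⟨f, hf⟩ := geometric_hahn_banach_open_point hP.interior isOpen_interior hz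
  refine ⟨AffineMap.const ℝ E (f z) - f.toLinearMap.toAffineMap, by simp, fun x hx => ?_,
    fun x hx => by simpa using hf x hx⟩
  have hx' : x ∈ closure (interior P) := by
    rw [hP.closure_interior_eq_closure_of_nonempty_interior hne]
    exact subset_closure hx
  have hle : f x ≤ f z := closure_minimal (fun y hy => (hf y hy).le)
    (isClosed_le f.continuous continuous_const) hx'
  simpa using hle

theorem exists_mem_openSegment_notMem_interior (hP : IsClosed P) (hy : y ∈ interior P)
    (hp : p ∉ P) : ∃ z ∈ openSegment ℝ y p, z ∈ P ∧ z ∉ interior P := by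
  obtain ⟨z, hz, hzP, hzi⟩ : ∃ z ∈ segment ℝ y p, z ∈ P ∧ z ∉ interior P := by
    by_contra! hcon
    obtain ⟨w, -, hwi, hwP⟩ := (convex_segment y p).isPreconnected (interior P) Pᶜ isOpen_interior
      hP.isOpen_compl (fun w hw => or_iff_not_imp_right.2 fun hwP => hcon w hw (not_not.1 hwP))
      ⟨y, left_mem_segment ℝ y p, hy⟩ ⟨p, right_mem_segment ℝ y p, hp⟩
    exact hwP (interior_subset hwi)
  exact ⟨z, mem_openSegment_of_ne_left_right (by rintro rfl; exact hzi hy)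
    (by rintro rfl; exact hp hzP) hz, hzP, hzi⟩

theorem left_mem_affineSpan_of_mem_openSegment (hz : z ∈ openSegment ℝ y p)
    (hzA : z ∈ affineSpan ℝ A) (hp : p ∈ affineSpan ℝ A) : y ∈ affineSpan ℝ A := by
  obtain ⟨s, t, hs, -, hst, rfl⟩ := hz
  convert AffineMap.lineMap_mem s⁻¹ hp hzA using 1
  rw [AffineMap.lineMap_apply_module]
  obtain rfl : t = 1 - s := by linarith
  match_scalars <;> field_simp
  ring

end Convex

theorem setDim_le_two_of_affineMap {A : Set E3} {y : E3} (ℓ : E3 →ᵃ[ℝ] ℝ)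
    (hℓ : ∀ x ∈ A, ℓ x = 0) (hA : A.Nonempty) (hy : ℓ y ≠ 0) : setDim A ≤ 2 := by
  obtain ⟨x, hx⟩ := hA
  have hle : vectorSpan ℝ A ≤ LinearMap.ker ℓ.linear := by
    rw [vectorSpan_def, Submodule.span_le]
    rintro _ ⟨u, hu, w, hw, rfl⟩
    simp [AffineMap.linearMap_vsub, -vsub_eq_sub, hℓ u hu, hℓ w hw]
  have hlt : LinearMap.ker ℓ.linear < ⊤ := by
    refine lt_top_iff_ne_top.2 fun htop => hy ?_
    have hker : y -ᵥ x ∈ LinearMap.ker ℓ.linear := htop ▸ Submodule.mem_top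
    rw [LinearMap.mem_ker, AffineMap.linearMap_vsub, hℓ x hx] at hker
    simpa using hker
  have h₁ := Submodule.finrank_mono hle
  have h₂ := Submodule.finrank_lt_finrank_of_lt hlt
  rw [finrank_top, finrank_euclideanSpace_fin] at h₂
  exact h₁.trans (Nat.lt_succ_iff.1 h₂)

variable {P : Set E3}

namespace IsPolytope

theorem isCompact (hP : IsPolytope P) : IsCompact P := by
  obtain ⟨V, rfl⟩ := hP
  exact V.finite_toSet.isCompact_convexHull ℝ

theorem convex (hP : IsPolytope P) : Convex ℝ P := by
  obtain ⟨V, rfl⟩ := hP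
  exact convex_convexHull ℝ _

end IsPolytope

namespace IsFaceOf

variable {A B : Set E3} {p : E3}

theorem nonempty (hA : IsFaceOf A P) : A.Nonempty := hA.1

theorem convex (hA : IsFaceOf A P) : Convex ℝ A := hA.2.2.1

theorem isExtreme (hA : IsFaceOf A P) : IsExtreme ℝ P A := hA.2.2.2

theorem subset (hA : IsFaceOf A P) : A ⊆ P := hA.isExtreme.1

theorem isCompact (hA : IsFaceOf A P) (hP : IsPolytope P) : IsCompact A :=
  hP.isCompact.of_isClosed_subset hA.2.1 hA.subset

theorem inter (hA : IsFaceOf A P) (hB : IsFaceOf B P) (hAB : (A ∩ B).Nonempty) :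
    IsFaceOf (A ∩ B) P :=
  ⟨hAB, hA.2.1.inter hB.2.1, hA.convex.inter hB.convex, hA.isExtreme.inter hB.isExtreme⟩

theorem mem_of_mem_affineSpan (hA : IsFaceOf A P) (hp : p ∈ P) (hpA : p ∈ affineSpan ℝ A) :
    p ∈ A := by
  obtain ⟨z, hz⟩ := hA.nonempty.intrinsicInterior hA.convex
  obtain ⟨t, ht, hmem⟩ := exists_add_smul_sub_mem_of_mem_intrinsicInterior hz hpA
  exact hA.isExtreme.2 hp (hA.subset hmem) (intrinsicInterior_subset hz)
    (mem_openSegment_add_smul_sub ht)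

theorem eq_of_subset_of_setDim_le (hA : IsFaceOf A P) (hB : IsFaceOf B P) (hAB : A ⊆ B)
    (hdim : setDim B ≤ setDim A) : A = B := by
  obtain ⟨z, hz⟩ := hA.nonempty
  have hspan : vectorSpan ℝ A = vectorSpan ℝ B :=
    Submodule.eq_of_le_of_finrank_le (vectorSpan_mono ℝ hAB) hdim
  refine hAB.antisymm fun p hp => hA.mem_of_mem_affineSpan (hB.subset hp) ?_
  rw [← AffineSubspace.vsub_right_mem_direction_iff_mem (subset_affineSpan ℝ A hz),
    direction_affineSpan, hspan]
  exact vsub_mem_vectorSpan ℝ hp (hAB hz)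

theorem isVertexOf_of_mem_extremePoints (hA : IsFaceOf A P) {v : E3}
    (hv : v ∈ A.extremePoints ℝ) : IsVertexOf v P :=
  ⟨singleton_nonempty _, isClosed_singleton, convex_singleton _,
    isExtreme_singleton.2 (hA.isExtreme.extremePoints_subset_extremePoints hv)⟩

theorem exists_isVertexOf_mem (hA : IsFaceOf A P) (hP : IsPolytope P) :
    ∃ v ∈ A, IsVertexOf v P := by
  obtain ⟨v, hv⟩ := (hA.isCompact hP).extremePoints_nonempty hA.nonempty
  exact ⟨v, extremePoints_subset hv, hA.isVertexOf_of_mem_extremePoints hv⟩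

theorem finite_extremePoints (hA : IsFaceOf A P) (hP : IsPolytope P) :
    (A.extremePoints ℝ).Finite := by
  obtain ⟨V, rfl⟩ := hP
  exact V.finite_toSet.subset
    (hA.isExtreme.extremePoints_subset_extremePoints.trans extremePoints_convexHull_subset)

theorem convexHull_extremePoints (hA : IsFaceOf A P) (hP : IsPolytope P) :
    convexHull ℝ (A.extremePoints ℝ) = A := by
  rw [← ((hA.finite_extremePoints hP).isClosed_convexHull ℝ).closure_eq,
    closure_convexHull_extremePoints (hA.isCompact hP) hA.convex]

end IsFaceOf

theorem IsPolytope.finite_faces (hP : IsPolytope P) : {A | IsFaceOf A P}.Finite := by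
  obtain ⟨V, rfl⟩ := hP
  refine (V.finite_toSet.powerset.image fun W => convexHull ℝ W).subset fun A hA =>
    ⟨A.extremePoints ℝ, ?_, hA.convexHull_extremePoints ⟨V, rfl⟩⟩
  exact hA.isExtreme.extremePoints_subset_extremePoints.trans extremePoints_convexHull_subset

theorem IsPolytope.isFaceOf_zeroLocus (hP : IsPolytope P) (ℓ : E3 →ᵃ[ℝ] ℝ)
    (hℓ : ∀ x ∈ P, 0 ≤ ℓ x) {z : E3} (hz : z ∈ P) (hℓz : ℓ z = 0) :
    IsFaceOf {x | x ∈ P ∧ ℓ x = 0} P := by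
  have hcont : Continuous ℓ := ℓ.continuous_of_finiteDimensional
  refine ⟨⟨z, hz, hℓz⟩, hP.isCompact.isClosed.inter (isClosed_eq hcont continuous_const),
    hP.convex.inter ((convex_singleton (0 : ℝ)).affine_preimage ℓ), inter_subset_left, ?_⟩
  rintro x hx y hy w ⟨-, hw⟩ ⟨s, t, hs, ht, hst, rfl⟩
  rw [Convex.combo_affine_apply hst, smul_eq_mul, smul_eq_mul] at hw
  have := hℓ x hx
  have := hℓ y hy
  exact ⟨hx, by nlinarith⟩

/-- A 3-dimensional convex polytope in `ℝ³`. -/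
structure IsPolytope3 (P : Set E3) : Prop where
  isPolytope : IsPolytope P
  setDim_eq : setDim P = 3

theorem IsSimplePolytope3.isPolytope3 (hP : IsSimplePolytope3 P) : IsPolytope3 P :=
  ⟨hP.1, hP.2.1⟩

namespace IsPolytope3

theorem interior_nonempty (hP : IsPolytope3 P) : (interior P).Nonempty := by
  have hne : P.Nonempty := by
    rw [nonempty_iff_ne_empty]
    rintro rfl
    have hdim := hP.setDim_eq
    rw [setDim, vectorSpan_empty, finrank_bot] at hdim
    norm_num at hdim
  rw [hP.isPolytope.convex.interior_nonempty_iff_affineSpan_eq_top,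
    AffineSubspace.affineSpan_eq_top_iff_vectorSpan_eq_top_of_nonempty ℝ _ _ hne]
  exact Submodule.eq_top_of_finrank_eq (hP.setDim_eq.trans finrank_euclideanSpace_fin.symm)

theorem notMem_interior_of_mem_facet (hP : IsPolytope3 P) {F : Set E3} (hF : IsFacetOf F P)
    {z : E3} (hz : z ∈ F) : z ∉ interior P := fun hzi => by
  have hPF := subset_of_mem_intrinsicInterior hF.1.isExtreme Subset.rfl
    (interior_subset_intrinsicInterior hzi) hz
  have hdim := hF.2
  rw [hF.1.subset.antisymm hPF, hP.setDim_eq] at hdim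
  norm_num at hdim

theorem exists_slack (hP : IsPolytope3 P) {F : Set E3} (hF : IsFacetOf F P) :
    ∃ ℓ : E3 →ᵃ[ℝ] ℝ, (∀ x ∈ P, 0 ≤ ℓ x) ∧ ∀ x ∈ P, ℓ x = 0 ↔ x ∈ F := by
  obtain ⟨z, hz⟩ := hF.1.nonempty.intrinsicInterior hF.1.convex
  have hzF := intrinsicInterior_subset hz
  obtain ⟨ℓ, hℓz, hℓ, hpos⟩ := exists_affineMap_pos_on_interior hP.isPolytope.convex
    hP.interior_nonempty (hP.notMem_interior_of_mem_facet hF hzF)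
  have hface := hP.isPolytope.isFaceOf_zeroLocus ℓ hℓ (hF.1.subset hzF) hℓz
  obtain ⟨y, hy⟩ := hP.interior_nonempty
  have hdim : setDim {x | x ∈ P ∧ ℓ x = 0} ≤ 2 :=
    setDim_le_two_of_affineMap ℓ (fun x hx => hx.2) hface.nonempty (hpos y hy).ne'
  have heq := hF.1.eq_of_subset_of_setDim_le hface
    (subset_of_mem_intrinsicInterior hface.isExtreme hF.1.subset hz ⟨hF.1.subset hzF, hℓz⟩)
    (hdim.trans hF.2.ge)
  refine ⟨ℓ, hℓ, fun x hx => ?_⟩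
  rw [heq]
  exact ⟨fun h => ⟨hx, h⟩, And.right⟩

end IsPolytope3

/-- An affine function that is nonnegative on `P` and vanishes on `P` exactly along the facet `F`;
it is only meaningful for facets of 3-dimensional polytopes. -/
def slack (P F : Set E3) : E3 →ᵃ[ℝ] ℝ :=
  Classical.epsilon fun ℓ => (∀ x ∈ P, 0 ≤ ℓ x) ∧ ∀ x ∈ P, ℓ x = 0 ↔ x ∈ F

namespace IsPolytope3

variable {F : Set E3} {x d : E3}

theorem slack_nonneg (hP : IsPolytope3 P) (hF : IsFacetOf F P) (hx : x ∈ P) : 0 ≤ slack P F x :=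
  (Classical.epsilon_spec (hP.exists_slack hF)).1 x hx

theorem slack_eq_zero_iff (hP : IsPolytope3 P) (hF : IsFacetOf F P) (hx : x ∈ P) :
    slack P F x = 0 ↔ x ∈ F :=
  (Classical.epsilon_spec (hP.exists_slack hF)).2 x hx

theorem slack_eq_zero (hP : IsPolytope3 P) (hF : IsFacetOf F P) (hx : x ∈ F) : slack P F x = 0 :=
  (hP.slack_eq_zero_iff hF (hF.1.subset hx)).2 hx

theorem slack_pos (hP : IsPolytope3 P) (hF : IsFacetOf F P) (hx : x ∈ P) (hxF : x ∉ F) :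
    0 < slack P F x :=
  (hP.slack_nonneg hF hx).lt_of_ne' fun h => hxF ((hP.slack_eq_zero_iff hF hx).1 h)

theorem exists_mem_interior_notMem_affineSpan (hP : IsPolytope3 P) (x : E3) :
    ∃ y ∈ interior P, ∀ A, IsFaceOf A P → setDim A ≤ 1 → y ∉ affineSpan ℝ (insert x A) := by
  let bad : Set (Set E3) := {A | IsFaceOf A P ∧ setDim A ≤ 1}
  have hfin : bad.Finite := hP.isPolytope.finite_faces.subset fun A hA => hA.1
  have hnull : MeasureTheory.volume (⋃ A ∈ bad, (affineSpan ℝ (insert x A) : Set E3)) = 0 := by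
    rw [MeasureTheory.measure_biUnion_null_iff hfin.countable]
    intro A hA
    refine MeasureTheory.Measure.addHaar_affineSubspace _ _ fun htop => ?_
    have hle := finrank_vectorSpan_insert_le_set ℝ A x
    rw [← direction_affineSpan, htop, AffineSubspace.direction_top, finrank_top,
      finrank_euclideanSpace_fin] at hle
    have := hA.2
    unfold setDim at this
    lia
  by_contra! hcon
  refine (isOpen_interior.measure_pos MeasureTheory.volume hP.interior_nonempty).ne'
    (MeasureTheory.measure_mono_null (fun y hy => ?_) hnull)
  obtain ⟨A, hA, hdim, hyA⟩ := hcon y hy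
  exact mem_biUnion (show A ∈ bad from ⟨hA, hdim⟩) hyA

/-- The segment from a generic interior point to `x` leaves `P` through a facet. -/
theorem exists_slack_neg (hP : IsPolytope3 P) (hx : x ∉ P) :
    ∃ F, IsFacetOf F P ∧ slack P F x < 0 := by
  obtain ⟨y, hy, hgeneric⟩ := hP.exists_mem_interior_notMem_affineSpan x
  obtain ⟨z, hz, hzP, hzi⟩ :=
    exists_mem_openSegment_notMem_interior hP.isPolytope.isCompact.isClosed hy hx
  obtain ⟨ℓ, hℓz, hℓ, hpos⟩ :=
    exists_affineMap_pos_on_interior hP.isPolytope.convex hP.interior_nonempty hzi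
  have hface := hP.isPolytope.isFaceOf_zeroLocus ℓ hℓ hzP hℓz
  have hle : setDim {w | w ∈ P ∧ ℓ w = 0} ≤ 2 :=
    setDim_le_two_of_affineMap ℓ (fun w hw => hw.2) hface.nonempty (hpos y hy).ne'
  have hge : ¬setDim {w | w ∈ P ∧ ℓ w = 0} ≤ 1 := fun hdim =>
    hgeneric _ hface hdim <| left_mem_affineSpan_of_mem_openSegment hz
      (subset_affineSpan ℝ _ (mem_insert_of_mem _ ⟨hzP, hℓz⟩))
      (subset_affineSpan ℝ _ (mem_insert _ _))
  have hF : IsFacetOf {w | w ∈ P ∧ ℓ w = 0} P := ⟨hface, hle.antisymm (not_le.1 hge)⟩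
  refine ⟨_, hF, ?_⟩
  have hslack_y := hP.slack_pos hF (interior_subset hy) fun h => (hpos y hy).ne' h.2
  have hslack_z := hP.slack_eq_zero hF ⟨hzP, hℓz⟩
  obtain ⟨s, t, hs, ht, hst, rfl⟩ := hz
  rw [Convex.combo_affine_apply hst, smul_eq_mul, smul_eq_mul] at hslack_z
  nlinarith

open Filter in
theorem eventually_add_smul_mem (hP : IsPolytope3 P) (hx : x ∈ P)
    (hd : ∀ F, IsFacetOf F P → x ∈ F → 0 ≤ (slack P F).linear d) :
    ∀ᶠ t in nhdsWithin (0 : ℝ) (Ioi 0), x + t • d ∈ P := by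
  have hfin : {F | IsFacetOf F P}.Finite := hP.isPolytope.finite_faces.subset fun F hF => hF.1
  have hslack : ∀ᶠ t in nhdsWithin (0 : ℝ) (Ioi 0), ∀ F ∈ {F | IsFacetOf F P},
      0 ≤ slack P F (x + t • d) := by
    refine (eventually_all_finite hfin).2 fun F hF => ?_
    by_cases hxF : x ∈ F
    · filter_upwards [self_mem_nhdsWithin] with t ht
      rw [add_comm, ← vadd_eq_add, AffineMap.map_vadd, hP.slack_eq_zero hF hxF, map_smul]
      simpa using mul_nonneg (le_of_lt ht) (hd F hF hxF)
    · have hcont : Continuous fun t : ℝ => slack P F (x + t • d) :=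
        (slack P F).continuous_of_finiteDimensional.comp (by fun_prop)
      refine (hcont.continuousAt.eventually_mem (s := Ioi 0) (Ioi_mem_nhds ?_)).filter_mono
        nhdsWithin_le_nhds |>.mono fun t ht => le_of_lt ht
      simpa using hP.slack_pos hF hx hxF
  refine hslack.mono fun t ht => ?_
  by_contra hout
  obtain ⟨F, hF, hneg⟩ := hP.exists_slack_neg hout
  exact (ht F hF).not_gt hneg

theorem mem_vectorSpan (hP : IsPolytope3 P) {A : Set E3} (hA : IsFaceOf A P) (hx : x ∈ A)
    (hd : ∀ F, IsFacetOf F P → x ∈ F → (slack P F).linear d = 0) : d ∈ vectorSpan ℝ A := by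
  have hpos := hP.eventually_add_smul_mem (hA.subset hx) fun F hF hxF => (hd F hF hxF).ge
  have hneg := hP.eventually_add_smul_mem (d := -d) (hA.subset hx) fun F hF hxF => by
    simp [hd F hF hxF]
  obtain ⟨t, ⟨ht₁, ht₂⟩, ht⟩ := ((hpos.and hneg).and self_mem_nhdsWithin).exists
  have hmem : x + t • d ∈ A := hA.isExtreme.2 ht₁ ht₂ hx
    ⟨1 / 2, 1 / 2, by norm_num, by norm_num, by norm_num, by module⟩
  simpa [(ne_of_gt ht : t ≠ 0)] using
    Submodule.smul_mem _ t⁻¹ (vsub_mem_vectorSpan ℝ hmem hx)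

end IsPolytope3

/-- `A 0`, `A 1`, `A 2` are the facets of `P` at the vertex `v`, and the coordinates in the basis
`b` are their slacks, so that `b k` points along the edge `A i ∩ A j` for
`{i, j, k} = {0, 1, 2}`. -/
structure VertexFrame (P : Set E3) (v : E3) (A : Fin 3 → Set E3)
    (b : Module.Basis (Fin 3) ℝ E3) : Prop where
  injective : Function.Injective A
  mem_range_iff : ∀ F, F ∈ range A ↔ IsFacetOf F P ∧ v ∈ F
  coord_eq : ∀ i, b.coord i = (slack P (A i)).linear

theorem IsVertexOf.eq_zero_of_slack_linear (hP : IsPolytope3 P) {v d : E3} (hv : IsVertexOf v P)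
    (hd : ∀ F, IsFacetOf F P → v ∈ F → (slack P F).linear d = 0) : d = 0 := by
  simpa [vectorSpan_singleton] using hP.mem_vectorSpan hv (mem_singleton v) hd

theorem IsSimplePolytope3.exists_vertexFrame (hP : IsSimplePolytope3 P) {v : E3}
    (hv : IsVertexOf v P) {F G : Set E3} (hF : IsFacetOf F P) (hG : IsFacetOf G P) (hvF : v ∈ F)
    (hvG : v ∈ G) (hFG : F ≠ G) :
    ∃ A b, VertexFrame P v A b ∧ A 0 = F ∧ A 1 = G := by
  have hcard := hP.2.2 v hv
  obtain ⟨K, hK⟩ : ∃ K, {H | IsFacetOf H P ∧ v ∈ H} \ {F, G} = {K} := by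
    rw [← ncard_eq_one, ncard_sdiff (by grind), hcard, ncard_pair hFG]
  obtain ⟨hKv, hKF, hKG⟩ : (IsFacetOf K P ∧ v ∈ K) ∧ K ≠ F ∧ K ≠ G := by
    simpa using (hK ▸ mem_singleton K : K ∈ {H | IsFacetOf H P ∧ v ∈ H} \ {F, G})
  have hinj : Function.Injective ![F, G, K] := by
    rw [← List.nodup_ofFn]
    simp [hFG, hKF.symm, hKG.symm]
  have hrange : ∀ H, H ∈ range ![F, G, K] ↔ IsFacetOf H P ∧ v ∈ H := fun H => by
    constructor
    · rintro ⟨i, rfl⟩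
      fin_cases i
      exacts [⟨hF, hvF⟩, ⟨hG, hvG⟩, hKv]
    · intro hH
      by_cases hHF : H = F
      · exact ⟨0, hHF.symm⟩
      by_cases hHG : H = G
      · exact ⟨1, hHG.symm⟩
      exact ⟨2, (hK.subset ⟨hH, by simp [hHF, hHG]⟩ : H = K).symm⟩
  let L : E3 →ₗ[ℝ] Fin 3 → ℝ := LinearMap.pi fun i => (slack P (![F, G, K] i)).linear
  have hL : Function.Injective L := (injective_iff_map_eq_zero L).2 fun d hd =>
    hv.eq_zero_of_slack_linear hP.isPolytope3 fun H hH hvH => by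
      obtain ⟨i, rfl⟩ := (hrange H).2 ⟨hH, hvH⟩
      exact congrFun hd i
  have hfinrank : Module.finrank ℝ E3 = Module.finrank ℝ (Fin 3 → ℝ) := by simp
  exact ⟨_, .ofEquivFun (L.linearEquivOfInjective hL hfinrank), ⟨hinj, hrange, fun i => rfl⟩,
    rfl, rfl⟩

namespace VertexFrame

variable {v x : E3} {A : Fin 3 → Set E3} {b : Module.Basis (Fin 3) ℝ E3} {i j k : Fin 3}

theorem isFacetOf (h : VertexFrame P v A b) (i : Fin 3) : IsFacetOf (A i) P :=
  ((h.mem_range_iff _).1 (mem_range_self i)).1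

theorem mem (h : VertexFrame P v A b) (i : Fin 3) : v ∈ A i :=
  ((h.mem_range_iff _).1 (mem_range_self i)).2

theorem exists_eq (h : VertexFrame P v A b) {F : Set E3} (hF : IsFacetOf F P) (hv : v ∈ F) :
    ∃ i, A i = F :=
  (h.mem_range_iff F).2 ⟨hF, hv⟩

theorem coord_sub (h : VertexFrame P v A b) (hP : IsPolytope3 P) (i : Fin 3) (x : E3) :
    b.coord i (x - v) = slack P (A i) x := by
  rw [h.coord_eq, ← vsub_eq_sub, AffineMap.linearMap_vsub,
    hP.slack_eq_zero (h.isFacetOf i) (h.mem i)]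
  simp

theorem eq_of_forall_mem (h : VertexFrame P v A b) (hP : IsPolytope3 P) (hx : ∀ i, x ∈ A i) :
    x = v :=
  sub_eq_zero.1 <| b.ext_elem fun i => by
    simpa [hP.slack_eq_zero (h.isFacetOf i) (hx i)] using h.coord_sub hP i x

theorem slack_linear_nonneg (h : VertexFrame P v A b) {F : Set E3} (hF : IsFacetOf F P)
    (hv : v ∈ F) (i : Fin 3) : 0 ≤ (slack P F).linear (b i) := by
  obtain ⟨j, rfl⟩ := h.exists_eq hF hv
  rw [← h.coord_eq, b.coord_apply, b.repr_self, Finsupp.single_apply]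
  split_ifs <;> norm_num

theorem exists_add_smul_mem (h : VertexFrame P v A b) (hP : IsPolytope3 P) (k : Fin 3) :
    ∃ t : ℝ, 0 < t ∧ ∀ i, i ≠ k → v + t • b k ∈ A i := by
  have hvP : v ∈ P := (h.isFacetOf 0).1.subset (h.mem 0)
  obtain ⟨t, htP, ht⟩ := ((hP.eventually_add_smul_mem hvP fun F hF hv =>
    h.slack_linear_nonneg hF hv k).and self_mem_nhdsWithin).exists
  refine ⟨t, ht, fun i hi => (hP.slack_eq_zero_iff (h.isFacetOf i) htP).1 ?_⟩
  rw [← h.coord_sub hP]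
  simp [hi.symm]

theorem setDim_inter (h : VertexFrame P v A b) (hP : IsPolytope3 P) (hij : i ≠ j) :
    setDim (A i ∩ A j) = 1 := by
  have hthird : ∀ i j : Fin 3, i ≠ j → ∃ k, i ≠ k ∧ j ≠ k ∧ ∀ m, m ≠ k → m = i ∨ m = j := by
    decide
  obtain ⟨k, hik, hjk, hall⟩ := hthird i j hij
  suffices vectorSpan ℝ (A i ∩ A j) = Submodule.span ℝ {b k} by
    rw [setDim, this, finrank_span_singleton (b.ne_zero k)]
  apply le_antisymm
  · rw [vectorSpan_eq_span_vsub_set_right ℝ (show v ∈ A i ∩ A j from ⟨h.mem i, h.mem j⟩),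
      Submodule.span_le]
    rintro _ ⟨x, ⟨hxi, hxj⟩, rfl⟩
    refine Submodule.mem_span_singleton.2 ⟨b.coord k (x - v), b.ext_elem fun m => ?_⟩
    by_cases hm : m = k
    · simp [hm]
    · have hxm : x ∈ A m := by
        rcases hall m hm with rfl | rfl <;> assumption
      have hzero := h.coord_sub hP m x
      rw [hP.slack_eq_zero (h.isFacetOf m) hxm, b.coord_apply] at hzero
      simpa [Ne.symm hm] using hzero.symm
  · rw [Submodule.span_singleton_le_iff_mem]
    obtain ⟨t, ht, hmem⟩ := h.exists_add_smul_mem hP k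
    simpa [ht.ne'] using Submodule.smul_mem _ t⁻¹
      (vsub_mem_vectorSpan ℝ (show v + t • b k ∈ A i ∩ A j from ⟨hmem i hik, hmem j hjk⟩)
        (show v ∈ A i ∩ A j from ⟨h.mem i, h.mem j⟩))

theorem isEdgeOf_inter (h : VertexFrame P v A b) (hP : IsPolytope3 P) (hij : i ≠ j) :
    IsEdgeOf (A i ∩ A j) P :=
  ⟨(h.isFacetOf i).1.inter (h.isFacetOf j).1 ⟨v, h.mem i, h.mem j⟩, h.setDim_inter hP hij⟩

/-- At a relative interior point `z` of `e`, each `b i` with `z ∉ A i` is a direction of `e`. -/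
theorem card_notMem_le (h : VertexFrame P v A b) (hP : IsPolytope3 P) {e : Set E3}
    (he : IsFaceOf e P) (hve : v ∈ e) {z : E3} (hz : z ∈ intrinsicInterior ℝ e) :
    Nat.card {i // z ∉ A i} ≤ setDim e := by
  have hze := intrinsicInterior_subset hz
  have hmem : ∀ i : {i // z ∉ A i}, b i.1 ∈ vectorSpan ℝ e := fun i =>
    hP.mem_vectorSpan he hze fun F hF hzF => by
      obtain ⟨j, rfl⟩ :=
        h.exists_eq hF (subset_of_mem_intrinsicInterior hF.1.isExtreme he.subset hz hzF hve)
      have hij : i.1 ≠ j := by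
        rintro rfl
        exact i.2 hzF
      simp [← h.coord_eq, hij]
  have hli : LinearIndependent ℝ fun i : {i // z ∉ A i} => (⟨b i.1, hmem i⟩ : vectorSpan ℝ e) :=
    .of_comp (vectorSpan ℝ e).subtype (b.linearIndependent.comp Subtype.val Subtype.val_injective)
  classical
  rw [Nat.card_eq_fintype_card]
  exact hli.fintype_card_le_finrank

end VertexFrame

theorem IsEdgeOf.exists_eq_inter (hP : IsSimplePolytope3 P) {e : Set E3} (he : IsEdgeOf e P) :
    ∃ F G, IsFacetOf F P ∧ IsFacetOf G P ∧ F ≠ G ∧ e = F ∩ G := by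
  have hP₃ := hP.isPolytope3
  obtain ⟨v, hve, hv⟩ := he.1.exists_isVertexOf_mem hP₃.isPolytope
  obtain ⟨F, ⟨hF, hvF⟩, G, ⟨hG, hvG⟩, hFG⟩ :=
    (one_lt_ncard_iff_nontrivial_and_finite.1 (by rw [hP.2.2 v hv]; norm_num)).1
  obtain ⟨A, b, h, -⟩ := hP.exists_vertexFrame hv hF hG hvF hvG hFG
  obtain ⟨z, hz⟩ := he.1.nonempty.intrinsicInterior he.1.convex
  have hcard := (h.card_notMem_le hP₃ he.1 hve hz).trans he.2.le
  obtain ⟨i, j, hij, hzi, hzj⟩ : ∃ i j, i ≠ j ∧ z ∈ A i ∧ z ∈ A j := by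
    by_contra! hcon
    obtain ⟨i, j, hij, hi, hj⟩ : ∃ i j, i ≠ j ∧ z ∉ A i ∧ z ∉ A j := by
      by_cases h₀ : z ∈ A 0
      · exact ⟨1, 2, by decide, hcon 0 1 (by decide) h₀, hcon 0 2 (by decide) h₀⟩
      · by_cases h₁ : z ∈ A 1
        · exact ⟨0, 2, by decide, h₀, hcon 1 2 (by decide) h₁⟩
        · exact ⟨0, 1, by decide, h₀, h₁⟩
    have := Finite.card_le_one_iff_subsingleton.1 hcard
    exact hij (congrArg Subtype.val (Subsingleton.elim (⟨i, hi⟩ : {i // z ∉ A i}) ⟨j, hj⟩))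
  have hsub : ∀ m, z ∈ A m → e ⊆ A m := fun m =>
    subset_of_mem_intrinsicInterior (h.isFacetOf m).1.isExtreme he.1.subset hz
  have hedge := h.isEdgeOf_inter hP₃ hij
  exact ⟨A i, A j, h.isFacetOf i, h.isFacetOf j, h.injective.ne hij,
    he.1.eq_of_subset_of_setDim_le hedge.1 (subset_inter (hsub i hzi) (hsub j hzj))
      (hedge.2.trans he.2.symm).le⟩

/-! ### The surface dual to a simple polytope -/

theorem IsFaceOf.exists_isVertexOf_le {A : Set E3} (hA : IsFaceOf A P) (hP : IsPolytope P)
    (φ : E3 →ᵃ[ℝ] ℝ) {x : E3} (hx : x ∈ A) : ∃ v ∈ A, IsVertexOf v P ∧ φ v ≤ φ x := by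
  rw [← hA.convexHull_extremePoints hP] at hx
  obtain ⟨v, hv, hle⟩ := ((concaveOn_id convex_univ).comp_affineMap φ).exists_le_of_mem_convexHull
    (subset_univ _) hx
  exact ⟨v, extremePoints_subset hv, hA.isVertexOf_of_mem_extremePoints hv, hle⟩

theorem IsVertexOf.mem_extremePoints {v : E3} (hv : IsVertexOf v P) {A : Set E3} (hA : A ⊆ P)
    (hvA : v ∈ A) : v ∈ A.extremePoints ℝ :=
  inter_extremePoints_subset_extremePoints_of_subset hA ⟨hvA, isExtreme_singleton.1 hv.2.2.2⟩

theorem eq_or_eq_or_eq_of_collinear {A : Set E3} {p q r : E3} (hp : p ∈ A.extremePoints ℝ)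
    (hq : q ∈ A.extremePoints ℝ) (hr : r ∈ A.extremePoints ℝ) (h : Collinear ℝ {p, q, r}) :
    p = q ∨ q = r ∨ r = p := by
  rw [mem_extremePoints_iff_forall_segment] at hp hq hr
  rcases h.wbtw_or_wbtw_or_wbtw with h | h | h <;> rw [← mem_segment_iff_wbtw] at h
  · exact (hq.2 p hp.1 r hr.1 h).imp_right fun h => .inl h.symm
  · exact .inr ((hr.2 q hq.1 p hp.1 h).imp_right Eq.symm)
  · exact (hp.2 r hr.1 q hq.1 h).elim (.inr ∘ .inr) (.inl ∘ Eq.symm)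

theorem IsEdgeOf.exists_eq_segment {e : Set E3} (he : IsEdgeOf e P) (hP : IsPolytope P) :
    ∃ p q, p ≠ q ∧ IsVertexOf p P ∧ IsVertexOf q P ∧ e = segment ℝ p q := by
  have hhull := he.1.convexHull_extremePoints hP
  obtain ⟨p, hpe, hp⟩ := he.1.exists_isVertexOf_mem hP
  replace hpe := hp.mem_extremePoints he.1.subset hpe
  obtain ⟨q, hqe, hqp⟩ : ∃ q ∈ e.extremePoints ℝ, q ≠ p := by
    by_contra! hall
    have hdim := he.2
    rw [← hhull, eq_singleton_iff_unique_mem.2 ⟨hpe, hall⟩, convexHull_singleton, setDim,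
      vectorSpan_singleton, finrank_bot] at hdim
    norm_num at hdim
  have hcol : Collinear ℝ e := collinear_iff_finrank_le_one.2 he.2.le
  have hext : e.extremePoints ℝ = {p, q} := by
    refine Subset.antisymm (fun r hr => ?_) (pair_subset hpe hqe)
    have hpqr : Collinear ℝ {p, q, r} := hcol.subset <| insert_subset (extremePoints_subset hpe) <|
      pair_subset (extremePoints_subset hqe) (extremePoints_subset hr)
    rcases eq_or_eq_or_eq_of_collinear hpe hqe hr hpqr with h | h | h
    · exact absurd h.symm hqp
    · exact .inr h.symm
    · exact .inl h
  exact ⟨p, q, hqp.symm, hp, he.1.isVertexOf_of_mem_extremePoints hqe,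
    by rw [← convexHull_pair, ← hext, hhull]⟩

/-- The edge `F ∩ G` joins the vertices `p` and `q`, and `K` and `L` are the respective third
facets there. -/
structure IsEdgeEnds (P F G : Set E3) (p : E3) (K : Set E3) (q : E3) (L : Set E3) : Prop where
  inter_eq : F ∩ G = segment ℝ p q
  isFacetOf_left : IsFacetOf K P
  isFacetOf_right : IsFacetOf L P
  mem_left : p ∈ K
  mem_right : q ∈ L
  left_notMem : p ∉ L
  right_notMem : q ∉ K
  eq_or_eq : ∀ H, IsFacetOf H P → H ≠ F → H ≠ G → (F ∩ G ∩ H).Nonempty → H = K ∨ H = L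

theorem IsSimplePolytope3.exists_third_facet (hP : IsSimplePolytope3 P) {v : E3}
    (hv : IsVertexOf v P) {F G : Set E3} (hF : IsFacetOf F P) (hG : IsFacetOf G P) (hvF : v ∈ F)
    (hvG : v ∈ G) (hFG : F ≠ G) :
    ∃ K, IsFacetOf K P ∧ F ∩ G ∩ K = {v} ∧ IsEdgeOf (F ∩ G) P ∧
      ∀ H, IsFacetOf H P → v ∈ H → H ≠ F → H ≠ G → H = K := by
  obtain ⟨A, b, h, rfl, rfl⟩ := hP.exists_vertexFrame hv hF hG hvF hvG hFG
  refine ⟨A 2, h.isFacetOf 2, ?_, h.isEdgeOf_inter hP.isPolytope3 (by decide), ?_⟩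
  · refine eq_singleton_iff_unique_mem.2 ⟨⟨⟨hvF, hvG⟩, h.mem 2⟩, fun x hx => ?_⟩
    exact h.eq_of_forall_mem hP.isPolytope3 (Fin.forall_fin_succ.2 ⟨hx.1.1, by simpa using
      ⟨hx.1.2, hx.2⟩⟩)
  · intro H hH hvH hH₀ hH₁
    obtain ⟨i, rfl⟩ := h.exists_eq hH hvH
    fin_cases i
    exacts [absurd rfl hH₀, absurd rfl hH₁, rfl]

namespace IsSimplePolytope3

variable {F G : Set E3}

theorem isEdgeOf_inter (hP : IsSimplePolytope3 P) (hF : IsFacetOf F P) (hG : IsFacetOf G P)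
    (hFG : F ≠ G) (hne : (F ∩ G).Nonempty) : IsEdgeOf (F ∩ G) P := by
  obtain ⟨v, hv, hvP⟩ := (hF.1.inter hG.1 hne).exists_isVertexOf_mem hP.1
  obtain ⟨K, -, -, hedge, -⟩ := hP.exists_third_facet hvP hF hG hv.1 hv.2 hFG
  exact hedge

theorem exists_isEdgeEnds (hP : IsSimplePolytope3 P) (hF : IsFacetOf F P) (hG : IsFacetOf G P)
    (hFG : F ≠ G) (hne : (F ∩ G).Nonempty) : ∃ p K q L, IsEdgeEnds P F G p K q L := by
  have hedge := hP.isEdgeOf_inter hF hG hFG hne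
  obtain ⟨p, q, hpq, hp, hq, hseg⟩ := hedge.exists_eq_segment hP.1
  have hpFG : p ∈ F ∩ G := hseg ▸ left_mem_segment ℝ p q
  have hqFG : q ∈ F ∩ G := hseg ▸ right_mem_segment ℝ p q
  obtain ⟨K, hK, hFGK, -, hKunique⟩ := hP.exists_third_facet hp hF hG hpFG.1 hpFG.2 hFG
  obtain ⟨L, hL, hFGL, -, hLunique⟩ := hP.exists_third_facet hq hF hG hqFG.1 hqFG.2 hFG
  refine ⟨p, K, q, L, hseg, hK, hL, (hFGK.superset rfl).2, (hFGL.superset rfl).2,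
    fun hpL => hpq (hFGL.subset ⟨hpFG, hpL⟩), fun hqK => hpq (hFGK.subset ⟨hqFG, hqK⟩).symm,
    fun H hH hHF hHG hmeet => ?_⟩
  obtain ⟨w, ⟨hw, hwH⟩, hwP⟩ := (hedge.1.inter hH.1 hmeet).exists_isVertexOf_mem hP.1
  have hwext := hwP.mem_extremePoints hedge.1.subset hw
  rcases (mem_extremePoints_iff_forall_segment.1 hwext).2 p hpFG q hqFG (hseg ▸ hw) with rfl | rfl
  · exact .inl (hKunique H hH hwH hHF hHG)
  · exact .inr (hLunique H hH hwH hHF hHG)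

end IsSimplePolytope3

namespace IsEdgeEnds

variable {F G K L : Set E3} {p q : E3}

theorem symm (h : IsEdgeEnds P F G p K q L) : IsEdgeEnds P F G q L p K where
  inter_eq := h.inter_eq.trans (segment_symm ℝ p q)
  isFacetOf_left := h.isFacetOf_right
  isFacetOf_right := h.isFacetOf_left
  mem_left := h.mem_right
  mem_right := h.mem_left
  left_notMem := h.right_notMem
  right_notMem := h.left_notMem
  eq_or_eq H hH hHF hHG hne := (h.eq_or_eq H hH hHF hHG hne).symm

theorem left_mem_inter (h : IsEdgeEnds P F G p K q L) : p ∈ F ∩ G :=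
  h.inter_eq ▸ left_mem_segment ℝ p q

theorem right_mem_inter (h : IsEdgeEnds P F G p K q L) : q ∈ F ∩ G :=
  h.inter_eq ▸ right_mem_segment ℝ p q

theorem left_ne (h : IsEdgeEnds P F G p K q L) : K ≠ F ∧ K ≠ G :=
  ⟨fun hK => h.right_notMem (hK ▸ h.right_mem_inter.1),
    fun hK => h.right_notMem (hK ▸ h.right_mem_inter.2)⟩

theorem eq_of_subset (h : IsEdgeEnds P F G p K q L) {H : Set E3} (hH : IsFacetOf H P)
    (hsub : F ∩ G ⊆ H) : H = F ∨ H = G := by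
  by_contra! hne
  rcases h.eq_or_eq H hH hne.1 hne.2 ⟨p, h.left_mem_inter, hsub h.left_mem_inter⟩ with rfl | rfl
  · exact h.right_notMem (hsub h.right_mem_inter)
  · exact h.left_notMem (hsub h.left_mem_inter)

end IsEdgeEnds

/-- The facets of `P`. -/
abbrev Facet (P : Set E3) : Type := {F : Set E3 // IsFacetOf F P}

/-- Three distinct facets of `P` with a common point, which is a vertex if `P` is simple. -/
structure MeetInVertex (a b c : Facet P) : Prop where
  left_ne_middle : a ≠ b
  middle_ne_right : b ≠ c
  left_ne_right : a ≠ c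
  nonempty : (a.1 ∩ b.1 ∩ c.1).Nonempty

namespace MeetInVertex

variable {a b c : Facet P}

theorem rotate (h : MeetInVertex a b c) : MeetInVertex b c a :=
  ⟨h.middle_ne_right, h.left_ne_right.symm, h.left_ne_middle.symm,
    h.nonempty.mono fun _ hx => ⟨⟨hx.1.2, hx.2⟩, hx.1.1⟩⟩

theorem swap (h : MeetInVertex a b c) : MeetInVertex b a c :=
  ⟨h.left_ne_middle.symm, h.left_ne_right, h.middle_ne_right,
    h.nonempty.mono fun _ hx => ⟨⟨hx.1.2, hx.1.1⟩, hx.2⟩⟩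

end MeetInVertex

theorem IsEdgeEnds.meetInVertex {a b : Facet P} {p q : E3} {K L : Set E3}
    (h : IsEdgeEnds P a b p K q L) (hab : a ≠ b) : MeetInVertex a b ⟨K, h.isFacetOf_left⟩ :=
  ⟨hab, fun hb => h.left_ne.2 (congrArg Subtype.val hb.symm),
    fun ha => h.left_ne.1 (congrArg Subtype.val ha.symm), p, h.left_mem_inter, h.mem_left⟩

theorem MeetInVertex.exists_isEdgeEnds (hP : IsSimplePolytope3 P) {a b c : Facet P}
    (h : MeetInVertex a b c) : ∃ p q L, IsEdgeEnds P a b p c q L := by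
  obtain ⟨p, K, q, L, hends⟩ := hP.exists_isEdgeEnds a.2 b.2
    (Subtype.coe_injective.ne h.left_ne_middle) (h.nonempty.mono inter_subset_left)
  rcases hends.eq_or_eq c c.2 (Subtype.coe_injective.ne h.left_ne_right.symm)
    (Subtype.coe_injective.ne h.middle_ne_right.symm) h.nonempty with rfl | rfl
  · exact ⟨p, q, L, hends⟩
  · exact ⟨q, p, K, hends.symm⟩

theorem MeetInVertex.existsUnique_opposite (hP : IsSimplePolytope3 P) {a b c : Facet P}
    (h : MeetInVertex a b c) : ∃! d, d ≠ c ∧ MeetInVertex a b d := by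
  obtain ⟨p, q, L, hends⟩ := h.exists_isEdgeEnds hP
  refine ⟨⟨L, hends.isFacetOf_right⟩, ⟨?_, hends.symm.meetInVertex h.left_ne_middle⟩, ?_⟩
  · exact fun hLc => hends.left_notMem ((Subtype.ext_iff.1 hLc).symm.subset hends.mem_left)
  · rintro d ⟨hdc, hd⟩
    exact Subtype.ext <| (hends.eq_or_eq d d.2 (Subtype.coe_injective.ne hd.left_ne_right.symm)
      (Subtype.coe_injective.ne hd.middle_ne_right.symm) hd.nonempty).resolve_left
      (Subtype.coe_injective.ne hdc)

/-- A vertex that minimizes `φ` on the two edges of the facet `A i` issuing from it minimizes `φ`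
on the whole facet. -/
theorem VertexFrame.le_of_forall_edge {v : E3} {A : Fin 3 → Set E3}
    {b : Module.Basis (Fin 3) ℝ E3} (h : VertexFrame P v A b) (hP : IsPolytope3 P)
    (φ : E3 →ᵃ[ℝ] ℝ) {i : Fin 3} (hφ : ∀ j ≠ i, ∀ x ∈ A i ∩ A j, φ v ≤ φ x) {x : E3}
    (hx : x ∈ A i) : φ v ≤ φ x := by
  have hlinear : ∀ y, φ y = φ.linear (y - v) + φ v := fun y => by
    rw [← vsub_eq_sub, AffineMap.linearMap_vsub]
    simp
  have hnonneg : ∀ k ≠ i, 0 ≤ φ.linear (b k) := fun k hki => by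
    have hthird : ∀ i k : Fin 3, k ≠ i → ∃ j, j ≠ i ∧ j ≠ k := by decide
    obtain ⟨j, hji, hjk⟩ := hthird i k hki
    obtain ⟨t, ht, hmem⟩ := h.exists_add_smul_mem hP k
    have hle := hφ j hji _ ⟨hmem i hki.symm, hmem j hjk⟩
    rw [hlinear (v + _), add_sub_cancel_left, map_smul, smul_eq_mul, le_add_iff_nonneg_left] at hle
    exact nonneg_of_mul_nonneg_right hle ht
  rw [hlinear x, ← b.sum_repr (x - v), map_sum, le_add_iff_nonneg_left]
  refine Finset.sum_nonneg fun k _ => ?_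
  rw [map_smul, smul_eq_mul, ← b.coord_apply, h.coord_sub hP]
  by_cases hki : k = i
  · rw [hki, hP.slack_eq_zero (h.isFacetOf i) hx, zero_mul]
  · exact mul_nonneg (hP.slack_nonneg (h.isFacetOf k) ((h.isFacetOf i).1.subset hx))
      (hnonneg k hki)

theorem VertexFrame.meetInVertex {v : E3} {A : Fin 3 → Set E3} {b : Module.Basis (Fin 3) ℝ E3}
    (h : VertexFrame P v A b) {i j k : Fin 3} (hij : i ≠ j) (hjk : j ≠ k) (hik : i ≠ k) :
    MeetInVertex ⟨A i, h.isFacetOf i⟩ ⟨A j, h.isFacetOf j⟩ ⟨A k, h.isFacetOf k⟩ where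
  left_ne_middle hA := hij (h.injective (congrArg Subtype.val hA))
  middle_ne_right hA := hjk (h.injective (congrArg Subtype.val hA))
  left_ne_right hA := hik (h.injective (congrArg Subtype.val hA))
  nonempty := ⟨v, ⟨h.mem i, h.mem j⟩, h.mem k⟩

namespace MeetInVertex

variable {a b c b' c' : Facet P}

/-- As in the simplex method, a vertex that minimizes `φ` among the vertices of `a` on the facets
of `S` minimizes `φ` on all of `a`: both edges of `a` at that vertex lie on facets of `S`. -/
theorem exists_vertexFrame_le (hP : IsSimplePolytope3 P) (h : MeetInVertex a b c)
    {S : Set (Facet P)} (hbS : b ∈ S) (haS : a ∉ S)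
    (hS : ∀ H ∈ S, ∀ H', MeetInVertex a H H' → H' ∈ S) (φ : E3 →ᵃ[ℝ] ℝ) :
    ∃ v A B, ∃ hA : VertexFrame P v A B, A 0 = a ∧
      (∀ j ≠ 0, (⟨A j, hA.isFacetOf j⟩ : Facet P) ∈ S) ∧ ∀ x ∈ a.1, φ v ≤ φ x := by
  let W : Set E3 := {v | v ∈ a.1.extremePoints ℝ ∧ ∃ H ∈ S, v ∈ H.1}
  have hW : ∀ H ∈ S, ∀ x ∈ a.1 ∩ H.1, ∃ v ∈ W, φ v ≤ φ x := by
    intro H hH x hx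
    obtain ⟨v, hv, hvP, hle⟩ := (a.2.1.inter H.2.1 ⟨x, hx⟩).exists_isVertexOf_le hP.1 φ hx
    exact ⟨v, ⟨hvP.mem_extremePoints a.2.1.subset hv.1, H, hH, hv.2⟩, hle⟩
  obtain ⟨x₀, hx₀⟩ := h.nonempty
  obtain ⟨v₀, hv₀, -⟩ := hW b hbS x₀ hx₀.1
  obtain ⟨v, ⟨hva, H, hH, hvH⟩, hmin⟩ := exists_min_image W φ
    ((a.2.1.finite_extremePoints hP.1).subset fun v hv => hv.1) ⟨v₀, hv₀⟩
  have haH : a ≠ H := fun haH => haS (haH ▸ hH)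
  obtain ⟨A, B, hA, hA₀, hA₁⟩ := hP.exists_vertexFrame (a.2.1.isVertexOf_of_mem_extremePoints hva)
    a.2 H.2 (extremePoints_subset hva) hvH (Subtype.coe_injective.ne haH)
  obtain rfl : ⟨A 0, hA.isFacetOf 0⟩ = a := Subtype.ext hA₀
  obtain rfl : ⟨A 1, hA.isFacetOf 1⟩ = H := Subtype.ext hA₁
  have hAS : ∀ j ≠ 0, (⟨A j, hA.isFacetOf j⟩ : Facet P) ∈ S := by
    intro j hj
    by_cases hj₁ : j = 1
    · exact hj₁ ▸ hH
    · exact hS _ hH _ (hA.meetInVertex (by decide) (Ne.symm hj₁) hj.symm)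
  refine ⟨v, A, B, hA, rfl, hAS, fun x => ?_⟩
  refine hA.le_of_forall_edge hP.isPolytope3 φ fun j hj x hx => ?_
  obtain ⟨w, hw, hwx⟩ := hW _ (hAS j hj) x hx
  exact (hmin w hw).trans hwx

theorem reflTransGen (hP : IsSimplePolytope3 P) (h : MeetInVertex a b c)
    (h' : MeetInVertex a b' c') : Relation.ReflTransGen (MeetInVertex a) b b' := by
  have hP₃ := hP.isPolytope3
  obtain ⟨v, A, B, hA, hA₀, hreached, hle⟩ := h.exists_vertexFrame_le hP
    (S := {H | H ≠ a ∧ Relation.ReflTransGen (MeetInVertex a) b H})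
    ⟨h.left_ne_middle.symm, .refl⟩ (fun ha => ha.1 rfl)
    (fun H hH H' hmeet => ⟨hmeet.left_ne_right.symm, hH.2.tail hmeet⟩) (slack P b')
  have hvP : v ∈ P := a.2.1.subset (hA₀ ▸ hA.mem 0)
  have hvb' : v ∈ b'.1 := by
    obtain ⟨z, ⟨hza, hzb'⟩, -⟩ := h'.nonempty
    refine (hP₃.slack_eq_zero_iff b'.2 hvP).1 (le_antisymm ?_ (hP₃.slack_nonneg b'.2 hvP))
    exact (hle z hza).trans_eq (hP₃.slack_eq_zero b'.2 hzb')
  obtain ⟨j, hj⟩ := hA.exists_eq b'.2 hvb'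
  have hj₀ : j ≠ 0 := by
    rintro rfl
    exact h'.left_ne_middle (Subtype.ext (hA₀.symm.trans hj))
  simpa only [hj] using (hreached j hj₀).2

end MeetInVertex

/-- The simplicial sphere dual to the boundary of a simple polytope: its vertices are the facets
of `P` and its triangles correspond to the vertices of `P`. -/
def IsSimplePolytope3.triangulation (hP : IsSimplePolytope3 P) :
    SurfaceTriangulation (Facet P) where
  Face := MeetInVertex
  rotate := MeetInVertex.rotate
  swap := MeetInVertex.swap
  ne := MeetInVertex.left_ne_middle
  existsUnique_opposite := MeetInVertex.existsUnique_opposite hP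
  link_connected := MeetInVertex.reflTransGen hP

theorem IsPolytope.finite_facet (hP : IsPolytope P) : Finite (Facet P) :=
  (hP.finite_faces.subset fun _ hF => hF.1).to_subtype

namespace IsSimplePolytope3

theorem triangulation_adj_iff (hP : IsSimplePolytope3 P) {a b : Facet P} :
    hP.triangulation.graph.Adj a b ↔ a ≠ b ∧ (a.1 ∩ b.1).Nonempty := by
  refine ⟨fun ⟨c, hc⟩ => ⟨hc.left_ne_middle, hc.nonempty.mono inter_subset_left⟩, ?_⟩
  rintro ⟨hab, hne⟩
  obtain ⟨p, K, q, L, hends⟩ :=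
    hP.exists_isEdgeEnds a.2 b.2 (Subtype.coe_injective.ne hab) hne
  exact ⟨_, hends.meetInVertex hab⟩

theorem eq_or_eq_of_inter_subset (hP : IsSimplePolytope3 P) {a b c : Facet P}
    (hab : hP.triangulation.graph.Adj a b) (hsub : a.1 ∩ b.1 ⊆ c.1) : c = a ∨ c = b := by
  obtain ⟨hne, hmeet⟩ := hP.triangulation_adj_iff.1 hab
  obtain ⟨p, K, q, L, hends⟩ :=
    hP.exists_isEdgeEnds a.2 b.2 (Subtype.coe_injective.ne hne) hmeet
  exact (hends.eq_of_subset c.2 hsub).imp Subtype.ext Subtype.ext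

theorem exists_adj (hP : IsSimplePolytope3 P) (a : Facet P) :
    ∃ b, hP.triangulation.graph.Adj a b := by
  obtain ⟨v, hva, hv⟩ := a.2.1.exists_isVertexOf_mem hP.1
  obtain ⟨F, hF, hFa⟩ := exists_ne_of_one_lt_ncard (by rw [hP.2.2 v hv]; norm_num) a.1
  exact ⟨⟨F, hF.1⟩, hP.triangulation_adj_iff.2
    ⟨fun ha => hFa (congrArg Subtype.val ha).symm, v, hva, hF.2⟩⟩

variable [Fintype (Facet P)]

theorem three_le_degree (hP : IsSimplePolytope3 P) (a : Facet P) :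
    3 ≤ hP.triangulation.graph.degree a := by
  obtain ⟨b, c, hface⟩ := hP.exists_adj a
  exact SurfaceTriangulation.three_le_degree hface

theorem facetEdges_eq_degree (hP : IsSimplePolytope3 P) (a : Facet P) :
    facetEdges P a = hP.triangulation.graph.degree a := by
  have hedges : {e | IsEdgeOf e P ∧ e ⊆ a.1} =
      (fun b : Facet P => a.1 ∩ b.1) '' hP.triangulation.graph.neighborFinset a := by
    ext e
    constructor
    · rintro ⟨he, hea⟩
      obtain ⟨F, G, hF, hG, hFG, rfl⟩ := he.exists_eq_inter hP
      have hadj : hP.triangulation.graph.Adj ⟨F, hF⟩ ⟨G, hG⟩ :=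
        hP.triangulation_adj_iff.2 ⟨fun h => hFG (congrArg Subtype.val h), he.1.nonempty⟩
      rcases hP.eq_or_eq_of_inter_subset hadj hea with rfl | rfl
      · exact ⟨⟨G, hG⟩, by simpa using hadj, rfl⟩
      · exact ⟨⟨F, hF⟩, by simpa using hadj.symm, inter_comm G F⟩
    · rintro ⟨b, hb, rfl⟩
      obtain ⟨hab, hne⟩ := hP.triangulation_adj_iff.1 (by simpa using hb)
      exact ⟨hP.isEdgeOf_inter a.2 b.2 (Subtype.coe_injective.ne hab) hne, inter_subset_left⟩
  have hinj : InjOn (fun b : Facet P => a.1 ∩ b.1) (hP.triangulation.graph.neighborFinset a) := by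
    intro b hb c hc hbc
    rw [Finset.mem_coe, SimpleGraph.mem_neighborFinset] at hb hc
    exact (hP.eq_or_eq_of_inter_subset hc (hbc.superset.trans inter_subset_right)).resolve_left
      hb.ne'
  rw [facetEdges, hedges, hinj.ncard_image, ncard_coe_finset,
    SimpleGraph.card_neighborFinset_eq_degree]

theorem pVec_eq_card (hP : IsSimplePolytope3 P) (k : ℕ) :
    pVec P k = (Finset.univ.filter fun a => hP.triangulation.graph.degree a = k).card := by
  have himage : {F | IsFacetOf F P ∧ facetEdges P F = k} = Subtype.val ''
      {a : Facet P | hP.triangulation.graph.degree a = k} := by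
    ext F
    simp only [← hP.facetEdges_eq_degree, mem_image, mem_ofPred_eq, Subtype.exists, exists_and_left,
      exists_prop, exists_eq_right_right, and_comm]
  rw [pVec, himage, ncard_image_of_injective _ Subtype.val_injective, ← ncard_coe_finset,
    Finset.coe_filter_univ]

end IsSimplePolytope3

/-! ### The plane separating the two sides of a 3-belt -/

theorem affineMap_apply_triple (φ : E3 →ᵃ[ℝ] ℝ) (x y z : E3) (s t : ℝ) :
    φ ((1 - s - t) • x + s • y + t • z) = (1 - s - t) * φ x + s * φ y + t * φ z := by
  have hφ : ∀ w, φ w = φ.linear w + φ 0 := congrFun φ.decomp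
  rw [hφ, hφ x, hφ y, hφ z]
  simp only [map_add, map_smul, smul_eq_mul]
  ring

theorem triple_mem_convexHull (x y z : E3) {s t : ℝ} (hs : 0 ≤ s) (ht : 0 ≤ t)
    (hst : 0 ≤ 1 - s - t) : (1 - s - t) • x + s • y + t • z ∈ convexHull ℝ {x, y, z} := by
  have := (convex_convexHull ℝ {x, y, z}).sum_mem (t := Finset.univ) (w := ![1 - s - t, s, t])
    (z := ![x, y, z]) (by simp [Fin.forall_fin_succ, hs, ht, hst])
    (by rw [Fin.sum_univ_three]; simp; ring)
    fun i _ => subset_convexHull ℝ _ (by fin_cases i <;> simp)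
  simpa [Fin.sum_univ_three] using this

theorem exists_ker_eq_of_finrank_add_one_eq {V : Type*} [AddCommGroup V] [Module ℝ V]
    [FiniteDimensional ℝ V] {W : Submodule ℝ V}
    (hW : Module.finrank ℝ W + 1 = Module.finrank ℝ V) :
    ∃ f : Module.Dual ℝ V, LinearMap.ker f = W := by
  have hlt : W < ⊤ := Submodule.lt_top_of_finrank_lt_finrank (by omega)
  obtain ⟨f, hf₀, hf⟩ := Submodule.exists_le_ker_of_lt_top W hlt
  have := Module.Dual.finrank_ker_add_one_of_ne_zero hf₀
  exact ⟨f, (Submodule.eq_of_le_of_finrank_eq hf (by omega)).symm⟩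

theorem exists_affineMap_eq_zero_iff {x y z : E3} (h : LinearIndependent ℝ ![y - x, z - x]) :
    ∃ g : E3 →ᵃ[ℝ] ℝ, ∀ w, g w = 0 ↔ ∃ s t : ℝ, (1 - s - t) • x + s • y + t • z = w := by
  have hspan := finrank_span_eq_card h
  rw [Matrix.range_cons_cons_empty] at hspan
  obtain ⟨f, hf⟩ := exists_ker_eq_of_finrank_add_one_eq
    (V := E3) (W := Submodule.span ℝ {y - x, z - x}) (by simp [hspan])
  refine ⟨f.toAffineMap - AffineMap.const ℝ E3 (f x), fun w => ?_⟩
  have hmem : f w - f x = 0 ↔ w - x ∈ Submodule.span ℝ {y - x, z - x} := by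
    rw [← hf, LinearMap.mem_ker, map_sub]
  refine hmem.trans <| Submodule.mem_span_pair.trans <| exists₂_congr fun s t => ?_
  rw [eq_sub_iff_add_eq]
  exact Eq.congr_left (by module)

/-- The plane through one point on each of the three edges of a triple of facets without common
point cuts the polytope in a triangle. -/
theorem IsPolytope3.exists_affineMap_triangle {A B C : Set E3} (hP : IsPolytope3 P)
    (hA : IsFacetOf A P) (hB : IsFacetOf B P) (hC : IsFacetOf C P) (hABC : A ∩ B ∩ C = ∅)
    {x y z : E3} (hx : x ∈ A ∩ B) (hy : y ∈ B ∩ C) (hz : z ∈ C ∩ A) :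
    ∃ g : E3 →ᵃ[ℝ] ℝ, g x = 0 ∧ g y = 0 ∧ g z = 0 ∧
      ∀ w ∈ P, g w = 0 → w ∈ convexHull ℝ {x, y, z} := by
  have hempty : ∀ w, w ∈ A → w ∈ B → w ∉ C := fun w hwA hwB hwC =>
    hABC.subset ⟨⟨hwA, hwB⟩, hwC⟩
  have hyA := hP.slack_pos hA (hB.1.subset hy.1) fun h => hempty y h hy.1 hy.2
  have hzB := hP.slack_pos hB (hC.1.subset hz.1) fun h => hempty z hz.2 h hz.1
  have hxC := hP.slack_pos hC (hA.1.subset hx.1) (hempty x hx.1 hx.2)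
  have hslackA : ∀ s t, slack P A ((1 - s - t) • x + s • y + t • z) = s * slack P A y := by
    simp [affineMap_apply_triple, hP.slack_eq_zero hA hx.1, hP.slack_eq_zero hA hz.2]
  have hslackB : ∀ s t, slack P B ((1 - s - t) • x + s • y + t • z) = t * slack P B z := by
    simp [affineMap_apply_triple, hP.slack_eq_zero hB hx.2, hP.slack_eq_zero hB hy.1]
  have hslackC : ∀ s t,
      slack P C ((1 - s - t) • x + s • y + t • z) = (1 - s - t) * slack P C x := by
    simp [affineMap_apply_triple, hP.slack_eq_zero hC hy.2, hP.slack_eq_zero hC hz.1]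
  have hindep : LinearIndependent ℝ ![y - x, z - x] := by
    rw [LinearIndependent.pair_iff]
    intro s t hst
    have hcomb : (1 - s - t) • x + s • y + t • z = x := by
      calc (1 - s - t) • x + s • y + t • z = x + (s • (y - x) + t • (z - x)) := by module
        _ = x := by rw [hst, add_zero]
    have hs := hslackA s t
    have ht := hslackB s t
    rw [hcomb, hP.slack_eq_zero hA hx.1, zero_eq_mul] at hs
    rw [hcomb, hP.slack_eq_zero hB hx.2, zero_eq_mul] at ht
    exact ⟨hs.resolve_right hyA.ne', ht.resolve_right hzB.ne'⟩
  obtain ⟨g, hg⟩ := exists_affineMap_eq_zero_iff hindep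
  refine ⟨g, (hg x).2 ⟨0, 0, by simp⟩, (hg y).2 ⟨1, 0, by simp⟩, (hg z).2 ⟨0, 1, by simp⟩, ?_⟩
  intro w hw hgw
  obtain ⟨s, t, rfl⟩ := (hg w).1 hgw
  exact triple_mem_convexHull x y z
    (nonneg_of_mul_nonneg_left ((hP.slack_nonneg hA hw).trans_eq (hslackA s t)) hyA)
    (nonneg_of_mul_nonneg_left ((hP.slack_nonneg hB hw).trans_eq (hslackB s t)) hzB)
    (nonneg_of_mul_nonneg_left ((hP.slack_nonneg hC hw).trans_eq (hslackC s t)) hxC)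

theorem IsEdgeEnds.eq_of_midpoint_mem {F G K L : Set E3} {p q : E3}
    (h : IsEdgeEnds P F G p K q L) (hF : IsFacetOf F P) {H : Set E3} (hH : IsFacetOf H P)
    (hmem : midpoint ℝ p q ∈ H) : H = F ∨ H = G := by
  refine h.eq_of_subset hH ?_
  have hp := hF.1.subset h.left_mem_inter.1
  have hq := hF.1.subset h.right_mem_inter.1
  have hopen := midpoint_mem_openSegment (𝕜 := ℝ) p q
  rw [h.inter_eq]
  exact hH.1.convex.segment_subset (hH.1.isExtreme.2 hp hq hmem hopen)
    (hH.1.isExtreme.right_mem_of_mem_openSegment hp hq hmem hopen)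

theorem IsEdgeEnds.midpoint_mem {F G K L : Set E3} {p q : E3}
    (h : IsEdgeEnds P F G p K q L) : midpoint ℝ p q ∈ F ∩ G :=
  h.inter_eq ▸ midpoint_mem_segment p q

/-- The triples of facets forming a 3-belt, expressed in the dual triangulation. -/
structure IsThreeBelt (hP : IsSimplePolytope3 P) (a b c : Facet P) : Prop where
  adj_left_middle : hP.triangulation.graph.Adj a b
  adj_middle_right : hP.triangulation.graph.Adj b c
  adj_right_left : hP.triangulation.graph.Adj c a
  inter_eq_empty : a.1 ∩ b.1 ∩ c.1 = ∅

/-- The plane `g = 0` passes through the midpoints of the three edges of the 3-belt `(a, b, c)` and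
meets no other facet. -/
structure IsSeparatingPlane (hP : IsSimplePolytope3 P) (g : E3 →ᵃ[ℝ] ℝ) (a b c : Facet P) :
    Prop where
  isThreeBelt : IsThreeBelt hP a b c
  left_middle : ∃ p K q L, IsEdgeEnds P a b p K q L ∧ g (midpoint ℝ p q) = 0
  middle_right : ∃ p K q L, IsEdgeEnds P b c p K q L ∧ g (midpoint ℝ p q) = 0
  right_left : ∃ p K q L, IsEdgeEnds P c a p K q L ∧ g (midpoint ℝ p q) = 0
  ne_zero : ∀ K : Facet P, K ≠ a → K ≠ b → K ≠ c → ∀ w ∈ K.1, g w ≠ 0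

/-- The facets on the positive side of the plane `g = 0`. -/
def positiveSide (P : Set E3) [Fintype (Facet P)] (g : E3 →ᵃ[ℝ] ℝ) : Finset (Facet P) :=
  open scoped Classical in Finset.univ.filter fun K => ∀ w ∈ K.1, 0 < g w

theorem mem_positiveSide [Fintype (Facet P)] {g : E3 →ᵃ[ℝ] ℝ} {K : Facet P} :
    K ∈ positiveSide P g ↔ ∀ w ∈ K.1, 0 < g w := by
  simp only [positiveSide, Finset.mem_filter_univ]

theorem disjoint_positiveSide_neg [Fintype (Facet P)] (g : E3 →ᵃ[ℝ] ℝ) :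
    Disjoint (positiveSide P g) (positiveSide P (-g)) := by
  refine Finset.disjoint_left.2 fun K hK hK' => ?_
  obtain ⟨w, hw⟩ := K.2.1.nonempty
  exact (mem_positiveSide.1 hK w hw).not_gt (neg_pos.1 (mem_positiveSide.1 hK' w hw))

namespace IsThreeBelt

variable {hP : IsSimplePolytope3 P} {a b c : Facet P}

theorem rotate (h : IsThreeBelt hP a b c) : IsThreeBelt hP b c a where
  adj_left_middle := h.adj_middle_right
  adj_middle_right := h.adj_right_left
  adj_right_left := h.adj_left_middle
  inter_eq_empty := by rw [← h.inter_eq_empty, inter_comm, ← inter_assoc]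

theorem exists_isSeparatingPlane (h : IsThreeBelt hP a b c) :
    ∃ g, IsSeparatingPlane hP g a b c := by
  have hP₃ := hP.isPolytope3
  have hends : ∀ d e : Facet P, hP.triangulation.graph.Adj d e →
      ∃ p K q L, IsEdgeEnds P d e p K q L := fun d e hde =>
    hP.exists_isEdgeEnds d.2 e.2 (Subtype.coe_injective.ne hde.ne)
      (hP.triangulation_adj_iff.1 hde).2
  obtain ⟨p, K, q, L, hab⟩ := hends a b h.adj_left_middle
  obtain ⟨p', K', q', L', hbc⟩ := hends b c h.adj_middle_right
  obtain ⟨p'', K'', q'', L'', hca⟩ := hends c a h.adj_right_left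
  obtain ⟨g, hx, hy, hz, hg⟩ := hP₃.exists_affineMap_triangle a.2 b.2 c.2 h.inter_eq_empty
    hab.midpoint_mem hbc.midpoint_mem hca.midpoint_mem
  refine ⟨g, h, ⟨p, K, q, L, hab, hx⟩, ⟨p', K', q', L', hbc, hy⟩, ⟨p'', K'', q'', L'', hca, hz⟩,
    fun H ha hb hc w hw hgw => ?_⟩
  have hpos : ∀ {d e : Facet P} {p K q L}, IsEdgeEnds P d e p K q L → H ≠ d → H ≠ e →
      0 < slack P H (midpoint ℝ p q) := fun {d e p K q L} hde hd he =>
    hP₃.slack_pos H.2 (d.2.1.subset hde.midpoint_mem.1) fun hmem =>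
      (hde.eq_of_midpoint_mem d.2 H.2 hmem).elim (hd ∘ Subtype.ext) (he ∘ Subtype.ext)
  have hsub : {midpoint ℝ p q, midpoint ℝ p' q', midpoint ℝ p'' q''} ⊆ slack P H ⁻¹' Ioi 0 :=
    insert_subset (hpos hab ha hb) (pair_subset (hpos hbc hb hc) (hpos hca hc ha))
  have := convexHull_min hsub ((convex_Ioi 0).affine_preimage _) (hg w (H.2.1.subset hw) hgw)
  exact ne_of_gt this (hP₃.slack_eq_zero H.2 hw)

end IsThreeBelt

namespace IsSeparatingPlane

variable {hP : IsSimplePolytope3 P} {g : E3 →ᵃ[ℝ] ℝ} {a b c : Facet P}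

theorem rotate (h : IsSeparatingPlane hP g a b c) : IsSeparatingPlane hP g b c a where
  isThreeBelt := h.isThreeBelt.rotate
  left_middle := h.middle_right
  middle_right := h.right_left
  right_left := h.left_middle
  ne_zero K hb hc ha := h.ne_zero K ha hb hc

theorem neg (h : IsSeparatingPlane hP g a b c) : IsSeparatingPlane hP (-g) a b c where
  isThreeBelt := h.isThreeBelt
  left_middle := by simpa only [AffineMap.coe_neg, Pi.neg_apply, neg_eq_zero] using h.left_middle
  middle_right := by simpa only [AffineMap.coe_neg, Pi.neg_apply, neg_eq_zero] using h.middle_right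
  right_left := by simpa only [AffineMap.coe_neg, Pi.neg_apply, neg_eq_zero] using h.right_left
  ne_zero K ha hb hc w hw := neg_ne_zero.2 (h.ne_zero K ha hb hc w hw)

theorem exists_isEdgeEnds_pos (h : IsSeparatingPlane hP g a b c) :
    ∃ p K q L, IsEdgeEnds P a b p K q L ∧ 0 < g p ∧ g q < 0 := by
  obtain ⟨p, K, q, L, hends, hzero⟩ := h.left_middle
  have hp : g p ≠ 0 := by
    refine h.ne_zero ⟨K, hends.isFacetOf_left⟩ ?_ ?_ ?_ p hends.mem_left
    · exact fun ha => hends.left_ne.1 (congrArg Subtype.val ha)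
    · exact fun hb => hends.left_ne.2 (congrArg Subtype.val hb)
    · rintro rfl
      exact h.isThreeBelt.inter_eq_empty.subset ⟨hends.left_mem_inter, hends.mem_left⟩
  have hsum : g p + g q = 0 := by
    rw [AffineMap.map_midpoint, midpoint_eq_smul_add] at hzero
    simpa using hzero
  rcases hp.lt_or_gt with hneg | hpos
  · exact ⟨q, L, p, K, hends.symm, by linarith, hneg⟩
  · exact ⟨p, K, q, L, hends, hpos, by linarith⟩

variable [Fintype (Facet P)]

theorem mem_positiveSide_of_pos (h : IsSeparatingPlane hP g a b c) {K : Facet P} (ha : K ≠ a)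
    (hb : K ≠ b) (hc : K ≠ c) {w : E3} (hw : w ∈ K.1) (hpos : 0 < g w) : K ∈ positiveSide P g := by
  refine mem_positiveSide.2 fun w' hw' => ?_
  by_contra! hle
  obtain ⟨u, hu, hgu⟩ := K.2.1.convex.isPreconnected.intermediate_value hw' hw
    g.continuous_of_finiteDimensional.continuousOn ⟨hle, hpos.le⟩
  exact h.ne_zero K ha hb hc u hu hgu

theorem left_notMem_positiveSide (h : IsSeparatingPlane hP g a b c) : a ∉ positiveSide P g := by
  obtain ⟨p, K, q, L, hends, -, hneg⟩ := h.exists_isEdgeEnds_pos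
  exact fun ha => (mem_positiveSide.1 ha q hends.right_mem_inter.1).not_gt hneg

theorem existsUnique_mem_positiveSide (h : IsSeparatingPlane hP g a b c) :
    ∃! u, u ∈ positiveSide P g ∧ hP.triangulation.Face a b u := by
  obtain ⟨p, K, q, L, hends, hpos, hneg⟩ := h.exists_isEdgeEnds_pos
  have hface := hends.meetInVertex h.isThreeBelt.adj_left_middle.ne
  have hKc : ⟨K, hends.isFacetOf_left⟩ ≠ c := by
    rintro rfl
    exact h.isThreeBelt.inter_eq_empty.subset ⟨hends.left_mem_inter, hends.mem_left⟩
  have hK := h.mem_positiveSide_of_pos hface.left_ne_right.symm hface.middle_ne_right.symm hKc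
    hends.mem_left hpos
  refine ⟨_, ⟨hK, hface⟩, fun d ⟨hd, hdface⟩ => ?_⟩
  rcases hends.eq_or_eq d d.2 (Subtype.coe_injective.ne hdface.left_ne_right.symm)
    (Subtype.coe_injective.ne hdface.middle_ne_right.symm) hdface.nonempty with hdK | rfl
  · exact Subtype.ext hdK
  · exact absurd (mem_positiveSide.1 hd q hends.mem_right) hneg.not_gt

theorem isSide (h : IsSeparatingPlane hP g a b c) :
    hP.triangulation.IsSide a b c (positiveSide P g) where
  not_face hface := hface.nonempty.ne_empty h.isThreeBelt.inter_eq_empty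
  left_notMem := h.left_notMem_positiveSide
  middle_notMem := h.rotate.left_notMem_positiveSide
  right_notMem := h.rotate.rotate.left_notMem_positiveSide
  mem_or_eq_of_adj x hx y hxy := by
    obtain ⟨-, w, hwx, hwy⟩ := hP.triangulation_adj_iff.1 hxy
    by_contra! hy
    exact hy.1 (h.mem_positiveSide_of_pos hy.2.1 hy.2.2.1 hy.2.2.2 hwy
      (mem_positiveSide.1 hx w hwx))
  existsUnique_left_middle := h.existsUnique_mem_positiveSide
  existsUnique_middle_right := h.rotate.existsUnique_mem_positiveSide
  existsUnique_right_left := h.rotate.rotate.existsUnique_mem_positiveSide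

end IsSeparatingPlane

theorem IsBelt.isThreeBelt (hP : IsSimplePolytope3 P) {B : Fin 3 → Set E3} (hB : IsBelt P B) :
    ∃ a b c : Facet P, IsThreeBelt hP a b c := by
  obtain ⟨-, ⟨-, hfacet, hedge⟩, hempty, -⟩ := hB
  have hadj : ∀ i, hP.triangulation.graph.Adj ⟨B i, hfacet i⟩ ⟨B (nxt i), hfacet (nxt i)⟩ := by
    intro i
    have he : IsEdgeOf (B i ∩ B (nxt i)) P := hedge (by norm_num) i
    refine hP.triangulation_adj_iff.2 ⟨fun heq => ?_, he.1.nonempty⟩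
    have heq' : B i = B (nxt i) := congrArg Subtype.val heq
    rw [← heq', inter_self] at he
    exact absurd (he.2.symm.trans (hfacet i).2) (by norm_num)
  exact ⟨⟨B 0, hfacet 0⟩, ⟨B 1, hfacet 1⟩, ⟨B 2, hfacet 2⟩, hadj 0, hadj 1, hadj 2, hempty rfl 0⟩

namespace IsSimplePolytope3

variable [Fintype (Facet P)]

theorem degree_ne_of_pVec_eq_zero (hP : IsSimplePolytope3 P) {k : ℕ} (hk : pVec P k = 0)
    (a : Facet P) : hP.triangulation.graph.degree a ≠ k := by
  rw [hP.pVec_eq_card, Finset.card_eq_zero, Finset.filter_eq_empty_iff] at hk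
  exact hk (Finset.mem_univ a)

theorem four_le_degree (hP : IsSimplePolytope3 P) (h3 : pVec P 3 = 0) (a : Facet P) :
    4 ≤ hP.triangulation.graph.degree a :=
  (hP.three_le_degree a).lt_of_ne' (hP.degree_ne_of_pVec_eq_zero h3 a)

theorem sum_degree_sub_six_le (hP : IsSimplePolytope3 P) (h8 : ∀ m, 8 ≤ m → pVec P m = 0) :
    ∑ a, (hP.triangulation.graph.degree a - 6) ≤ pVec P 7 := by
  rw [hP.pVec_eq_card, Finset.card_filter]
  refine Finset.sum_le_sum fun a _ => ?_
  have hdeg : hP.triangulation.graph.degree a ≤ 7 :=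
    not_lt.1 fun h => hP.degree_ne_of_pVec_eq_zero (h8 _ h) a rfl
  split_ifs <;> omega

end IsSimplePolytope3

theorem IsSimplePolytope3.ncard_facets_ne_four (hP : IsSimplePolytope3 P) (h3 : pVec P 3 = 0) :
    (facets P).ncard ≠ 4 := by
  have := hP.1.finite_facet
  have := Fintype.ofFinite (Facet P)
  intro hcard
  obtain ⟨F, hF : IsFacetOf F P⟩ := nonempty_of_ncard_ne_zero (hcard.trans_ne four_ne_zero)
  have hverts : Fintype.card (Facet P) = 4 :=
    Nat.card_eq_fintype_card.symm.trans ((Nat.card_coe_set_eq (facets P)).trans hcard)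
  have hlt := hP.triangulation.graph.degree_lt_card_verts ⟨F, hF⟩
  exact (hP.four_le_degree h3 _).not_gt (hverts ▸ hlt)

/-- A simple 3-polytope with `p₃ = 0`, `p₄ ≤ 2`, `p₇ ≤ 1` and `pₖ = 0` for `k ≥ 8`
has no 3-belts; in particular it is a flag 3-polytope. -/
theorem no_three_belts (P : Set E3) (hP : IsSimplePolytope3 P)
    (h3 : pVec P 3 = 0) (h4 : pVec P 4 ≤ 2) (h7 : pVec P 7 ≤ 1)
    (h8 : ∀ m, 8 ≤ m → pVec P m = 0) :
    (∀ B : Fin 3 → Set E3, ¬ IsBelt P B) ∧ IsFlag3Polytope P := by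
  classical
  have := hP.1.finite_facet
  have := Fintype.ofFinite (Facet P)
  have hbelt : ∀ B : Fin 3 → Set E3, ¬ IsBelt P B := by
    intro B hB
    obtain ⟨a, b, c, habc⟩ := hB.isThreeBelt hP
    obtain ⟨g, hg⟩ := habc.exists_isSeparatingPlane
    refine hg.isSide.false_of_disjoint hg.neg.isSide (disjoint_positiveSide_neg g)
      (hP.four_le_degree h3) ?_ ((hP.sum_degree_sub_six_le h8).trans h7)
    rwa [← hP.pVec_eq_card]
  exact ⟨hbelt, hP, hP.ncard_facets_ne_four h3, hbelt⟩
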